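/- For generic limit-periodic V : ℤ → ℝ (i.e., for every V in some dense Gδ subset of LP(ℤ,ℝ)), the spectrum of the discrete Schrödinger operator H_{λV^{⊛k}} is a Cantor set of zero Hausdorff dimension for every λ ≠ 0 and every k ∈ ℕ. -/

import Mathlib

/-!
For bounded `W`, the operator `H_W - E` is symmetric, so `E` lies outside the spectrum iff `H_W - E`
is bounded below on `ℓ²(ℤ)` (`notMem_spectrum_iff`). Lower bounds are stable under small changes of
the potential, the coupling and the energy (`BddBelowOp.perturb`).

*Gaps.* For a periodic potential, a monodromy matrix of trace outside `[-2, 2]` gives a lower bound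
(`bddBelowOp_of_trace`). Near any periodic potential there is a periodic one with this property at a
prescribed energy, coupling and repetition number (`gap_open`): otherwise all products of transfer
matrices over perturbed periods form a semigroup of determinant-one matrices with traces in
`[-2, 2]`, whose elliptic elements commute, and varying a single letter contradicts this
(`exists_hyperbolic_word`). By compactness, finitely many periodic potentials near the given one
suffice for all energies, all couplings with `1 / K ≤ |λ| ≤ K` and all `k ≤ K` (`finite_family`).

*Thin spectrum.* Glue long stretches, of length proportional to `j`, of these finitely many
potentials into one periodic potential. At every energy some stretch belongs to a potential with a
gap there, so approximate solutions are exponentially small in `j` at its centre (`strip_decay`).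
Cutting at the centres decouples the operator into finite boxes, and the spectrum is contained in
exponentially small neighbourhoods of the box eigenvalues, whose number grows only linearly in `j`
(`thin_lower`, `thin_potential`). This covers the spectrum by `m` intervals of radius `v ^ K` with
`m * v ≤ 1 / K`, and the same cover works for all nearby potentials (`thin_nhds`).

*Genericity.* Hence, for each `K`, the potentials with such a cover contain a dense open set; by
Baire the intersection over `K` is a dense `Gδ` set, and for its members the covers force Hausdorff
dimension zero (`dimH_eq_zero_of_cover`), in particular empty interior. The spectrum is always
compact and nonempty, and limit-periodicity excludes isolated points: an isolated point would be an
eigenvalue with an at most two-dimensional eigenspace, but far translates of an eigenvector are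
almost eigenvectors that are tiny at the sites `0, 1` determining eigenvectors
(`preperfect_spectrum`).
-/

open Set MeasureTheory BoundedContinuousFunction

noncomputable section

/-- ℓ²(ℤ; ℝ). -/
abbrev Ell2 : Type := lp (fun _ : ℤ => ℝ) 2

/-- Spectrum of the discrete Schrödinger operator `H_W = Δ + W` on `ℓ²(ℤ)`:
`E` lies in the spectrum iff `H_W - E` is not a linear bijection of `ℓ²(ℤ)`
(for bounded `W`, by the open mapping theorem this is equivalent to `H_W - E`
not being boundedly invertible). -/
def SchrodingerSpectrum (W : ℤ → ℝ) : Set ℝ :=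
  {E : ℝ | ¬ ∃ T : Ell2 ≃ₗ[ℝ] Ell2,
      ∀ f : Ell2, ∀ n : ℤ,
        (T f) n = f (n - 1) + f (n + 1) + (W n - E) * f n}

/-- A Cantor set of zero Hausdorff dimension: nonempty, compact, without isolated
points, with empty interior, and of Hausdorff dimension zero. -/
def IsZeroDimCantor (s : Set ℝ) : Prop :=
  s.Nonempty ∧ IsCompact s ∧ Preperfect s ∧ interior s = ∅ ∧ dimH s = 0

/-- Periodic bounded sequences. -/
def IsPeriodicSeq {α : Type*} [PseudoMetricSpace α] (W : ℤ →ᵇ α) : Prop :=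
  ∃ q : ℕ, 0 < q ∧ ∀ n : ℤ, W (n + q) = W n

/-- The limit-periodic functions `ℤ → ℝ`: uniform limits of periodic functions. -/
def LPZ : Set (ℤ →ᵇ ℝ) := closure {W : ℤ →ᵇ ℝ | IsPeriodicSeq W}

/-- The `k`-fold repetition of `V`: `V^{⊛k}(n) = V(⌊n/k⌋)`. -/
def repeatPot (V : ℤ → ℝ) (k : ℕ) : ℤ → ℝ :=
  fun n => V (Int.fdiv n k)

/-! ### Operators bounded below on square-summable sequences -/

section

/-- Square-summability of a real sequence. -/
def Sq (f : ℤ → ℝ) : Prop := Summable fun n => f n ^ 2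

/-- The squared `ℓ²` norm of a real sequence (meaningful under `Sq`). -/
def N2 (f : ℤ → ℝ) : ℝ := ∑' n, f n ^ 2

/-- The formal Schrödinger operator acting on arbitrary sequences; energies are absorbed in `W`. -/
def schr (W f : ℤ → ℝ) (n : ℤ) : ℝ := f (n - 1) + f (n + 1) + W n * f n

/-- `schr W` is bounded below on `ℓ²(ℤ)`, with constant `c` for the squared norms. -/
def BddBelowOp (W : ℤ → ℝ) (c : ℝ) : Prop := ∀ f, Sq f → c * N2 f ≤ N2 (schr W f)

lemma Sq.hasSum {f : ℤ → ℝ} (h : Sq f) : HasSum (fun n => f n ^ 2) (N2 f) := Summable.hasSum h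

lemma Sq.hasSum_shift {f : ℤ → ℝ} (h : Sq f) (a : ℤ) :
    HasSum (fun n => f (n + a) ^ 2) (N2 f) :=
  (Equiv.hasSum_iff (Equiv.addRight a)).2 h.hasSum

lemma N2_nonneg (f : ℤ → ℝ) : 0 ≤ N2 f := tsum_nonneg fun _ => sq_nonneg _

/-- Comparison: a termwise bound by a convergent series gives `Sq` together with a norm bound. -/
lemma sq_of_le {f F : ℤ → ℝ} {S : ℝ} (hF : HasSum F S) (h : ∀ n, f n ^ 2 ≤ F n) :
    Sq f ∧ N2 f ≤ S := by
  have hs : Sq f := Summable.of_nonneg_of_le (fun _ => sq_nonneg _) h hF.summable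
  exact ⟨hs, hasSum_le h hs.hasSum hF⟩

lemma Sq.shift {f : ℤ → ℝ} (h : Sq f) (a : ℤ) : Sq (fun n => f (n + a)) :=
  (h.hasSum_shift a).summable

lemma N2_shift {f : ℤ → ℝ} (h : Sq f) (a : ℤ) : N2 (fun n => f (n + a)) = N2 f :=
  (h.hasSum_shift a).tsum_eq

lemma schr_bound {W f : ℤ → ℝ} {C : ℝ} (hW : ∀ n, |W n| ≤ C) (hf : Sq f) :
    Sq (schr W f) ∧ N2 (schr W f) ≤ 3 * N2 f + 3 * N2 f + 3 * C ^ 2 * N2 f := by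
  refine sq_of_le ((((hf.hasSum_shift (-1)).mul_left 3).add ((hf.hasSum_shift 1).mul_left 3)).add
    (hf.hasSum.mul_left (3 * C ^ 2))) fun n => ?_
  have h1 : (W n * f n) ^ 2 ≤ C ^ 2 * f n ^ 2 := by
    rw [mul_pow]
    exact mul_le_mul_of_nonneg_right (sq_le_sq' (abs_le.1 (hW n)).1 (abs_le.1 (hW n)).2)
      (sq_nonneg _)
  simp only [schr, ← sub_eq_add_neg]
  nlinarith [sq_nonneg (f (n - 1) - f (n + 1)), sq_nonneg (f (n - 1) - W n * f n),
    sq_nonneg (f (n + 1) - W n * f n)]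

/-- Lower bounds survive small perturbations of the potential. -/
lemma BddBelowOp.perturb {W W' : ℤ → ℝ} {c d : ℝ} (h : BddBelowOp W c)
    (hW' : ∃ C, ∀ n, |W' n| ≤ C) (hd : ∀ n, |W n - W' n| ≤ d) (hcd : 2 * d ^ 2 ≤ c / 2) :
    BddBelowOp W' (c / 4) := by
  obtain ⟨C, hC⟩ := hW'
  intro f hf
  have h1 := h f hf
  have h2 := (schr_bound hC hf).1
  have h3 := (sq_of_le (f := schr W f) ((h2.hasSum.mul_left 2).add
    (hf.hasSum.mul_left (2 * d ^ 2))) fun n => ?_).2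
  · nlinarith [N2_nonneg f]
  have h4 : ((W n - W' n) * f n) ^ 2 ≤ d ^ 2 * f n ^ 2 := by
    rw [mul_pow]
    exact mul_le_mul_of_nonneg_right (sq_le_sq' (abs_le.1 (hd n)).1 (abs_le.1 (hd n)).2)
      (sq_nonneg _)
  have h5 : schr W f n = schr W' f n + (W n - W' n) * f n := by simp only [schr]; ring
  rw [h5]
  nlinarith [sq_nonneg (schr W' f n - (W n - W' n) * f n)]

/-- Energies far from the range of the potential are outside the spectrum. -/
lemma bddBelowOp_of_large {W : ℤ → ℝ} (hW : ∃ C, ∀ n, |W n| ≤ C) (h : ∀ n, 4 ≤ |W n|) :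
    BddBelowOp W 4 := by
  obtain ⟨C, hC⟩ := hW
  intro f hf
  have h2 := (schr_bound hC hf).1
  have h3 := (sq_of_le (f := fun n => 4 * f n) (((h2.hasSum.mul_left 2).add
    ((hf.hasSum_shift (-1)).mul_left 4)).add ((hf.hasSum_shift 1).mul_left 4)) fun n => ?_).2
  · have : N2 (fun n => 4 * f n) = 16 * N2 f := by
      simp only [N2, mul_pow, tsum_mul_left]; norm_num
    linarith
  have h4 : (4 * f n) ^ 2 ≤ (W n * f n) ^ 2 := by
    rw [mul_pow, mul_pow]
    refine mul_le_mul_of_nonneg_right ?_ (sq_nonneg _)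
    rw [← sq_abs (W n)]
    nlinarith [h n]
  refine h4.trans ?_
  have h5 : W n * f n = schr W f n - f (n - 1) - f (n + 1) := by simp only [schr]; ring
  rw [h5]
  simp only [← sub_eq_add_neg]
  nlinarith [sq_nonneg (schr W f n + f (n - 1) + f (n + 1)), sq_nonneg (f (n - 1) - f (n + 1))]

lemma BddBelowOp.translate {W : ℤ → ℝ} {c : ℝ} (a : ℤ) (h : BddBelowOp (fun n => W (n + a)) c)
    (hW : ∃ C, ∀ n, |W n| ≤ C) :
    BddBelowOp W c := by
  intro f hf
  obtain ⟨C, hC⟩ := hW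
  have h1 := h _ (hf.shift a)
  rw [N2_shift hf] at h1
  refine h1.trans (le_of_eq ?_)
  rw [← N2_shift (schr_bound hC hf).1 a]
  congr 1
  ext n
  simp only [schr]
  rw [show n - 1 + a = n + a - 1 by ring, show n + 1 + a = n + a + 1 by ring]

end

/-! ### The spectrum in terms of lower bounds -/

section

/-- `ℓ²(ℤ; 𝕜)` for `𝕜 = ℝ` or `ℂ`. -/
abbrev LTwo (𝕜 : Type) [RCLike 𝕜] : Type := lp (fun _ : ℤ => 𝕜) 2

section
variable {𝕜 : Type} [RCLike 𝕜]

lemma LTwo.hasSum (f : LTwo 𝕜) : HasSum (fun n => ‖f n‖ ^ 2) (‖f‖ ^ 2) := by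
  have := lp.hasSum_norm (p := 2) (by norm_num) f
  simpa using this

lemma LTwo.mem {f : ℤ → 𝕜} (h : Summable fun n => ‖f n‖ ^ 2) : Memℓp f 2 := by
  apply memℓp_gen
  simpa using h

lemma norm_sq_eq_re_im (z : 𝕜) : ‖z‖ ^ 2 = RCLike.re z ^ 2 + RCLike.im z ^ 2 := by
  rw [← RCLike.normSq_eq_def', RCLike.normSq_apply]; ring

lemma LTwo.sq_re (f : LTwo 𝕜) : Sq (fun n => RCLike.re (f n)) :=
  (sq_of_le f.hasSum fun n => by rw [norm_sq_eq_re_im]; nlinarith [sq_nonneg (RCLike.im (f n))]).1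

lemma LTwo.sq_im (f : LTwo 𝕜) : Sq (fun n => RCLike.im (f n)) :=
  (sq_of_le f.hasSum fun n => by rw [norm_sq_eq_re_im]; nlinarith [sq_nonneg (RCLike.re (f n))]).1

lemma LTwo.norm_sq (f : LTwo 𝕜) :
    ‖f‖ ^ 2 = N2 (fun n => RCLike.re (f n)) + N2 (fun n => RCLike.im (f n)) := by
  have h := f.sq_re.hasSum.add f.sq_im.hasSum
  simp only [← norm_sq_eq_re_im] at h
  exact f.hasSum.unique h

/-- A real square-summable sequence, as an element of `ℓ²(ℤ; 𝕜)`. -/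
def ofSq (𝕜 : Type) [RCLike 𝕜] (f : ℤ → ℝ) (hf : Sq f) : LTwo 𝕜 :=
  ⟨fun n => (f n : 𝕜), LTwo.mem (by simpa [Sq] using hf)⟩

lemma ofSq_apply (f : ℤ → ℝ) (hf : Sq f) (n : ℤ) : ofSq 𝕜 f hf n = (f n : 𝕜) := rfl

lemma norm_ofSq (f : ℤ → ℝ) (hf : Sq f) : ‖ofSq 𝕜 f hf‖ ^ 2 = N2 f := by
  rw [LTwo.norm_sq]
  simp [ofSq_apply, N2]

lemma LTwo.hasSum_shift (f : LTwo 𝕜) (a : ℤ) : HasSum (fun n => ‖f (n + a)‖ ^ 2) (‖f‖ ^ 2) :=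
  (Equiv.hasSum_iff (f := fun n => ‖f n‖ ^ 2) (Equiv.addRight a)).2 f.hasSum

/-- Translation `f ↦ f (· + a)` on `ℓ²`. -/
def shiftL (𝕜 : Type) [RCLike 𝕜] (a : ℤ) : LTwo 𝕜 →ₗ[𝕜] LTwo 𝕜 where
  toFun f := ⟨fun n => f (n + a), LTwo.mem (𝕜 := 𝕜) (f.hasSum_shift a).summable⟩
  map_add' f g := by ext n; rfl
  map_smul' c f := by ext n; rfl

lemma shiftL_apply (a : ℤ) (f : LTwo 𝕜) (n : ℤ) : shiftL 𝕜 a f n = f (n + a) := rfl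

lemma norm_shiftL (a : ℤ) (f : LTwo 𝕜) : ‖shiftL 𝕜 a f‖ = ‖f‖ := by
  have h1 := (shiftL 𝕜 a f).hasSum
  exact (sq_eq_sq₀ (norm_nonneg _) (norm_nonneg _)).1 (h1.unique (f.hasSum_shift a))

/-- Multiplication by the bounded real sequence `W` on `ℓ²`. -/
def mulL (𝕜 : Type) [RCLike 𝕜] (W : ℤ → ℝ) (hW : ∃ C, ∀ n, |W n| ≤ C) :
    LTwo 𝕜 →ₗ[𝕜] LTwo 𝕜 where
  toFun f := ⟨fun n => (W n : 𝕜) * f n, LTwo.mem (𝕜 := 𝕜) (by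
    obtain ⟨C, hC⟩ := hW
    refine Summable.of_nonneg_of_le (fun _ => sq_nonneg _) (fun n => ?_)
      (f.hasSum.summable.mul_left (C ^ 2))
    rw [norm_mul, mul_pow, RCLike.norm_ofReal]
    exact mul_le_mul_of_nonneg_right (pow_le_pow_left₀ (abs_nonneg _) (hC n) 2) (sq_nonneg _))⟩
  map_add' f g := by
    ext n
    exact mul_add _ _ _
  map_smul' c f := by
    ext n
    exact mul_left_comm _ _ _

lemma mulL_apply (W : ℤ → ℝ) (hW) (f : LTwo 𝕜) (n : ℤ) : mulL 𝕜 W hW f n = (W n : 𝕜) * f n := rfl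

/-- The Schrödinger operator on `ℓ²(ℤ; 𝕜)` as a linear map. -/
def schrL (𝕜 : Type) [RCLike 𝕜] (W : ℤ → ℝ) (hW : ∃ C, ∀ n, |W n| ≤ C) :
    LTwo 𝕜 →ₗ[𝕜] LTwo 𝕜 := shiftL 𝕜 (-1) + shiftL 𝕜 1 + mulL 𝕜 W hW

lemma schrL_apply (W : ℤ → ℝ) (hW) (f : LTwo 𝕜) (n : ℤ) :
    schrL 𝕜 W hW f n = f (n - 1) + f (n + 1) + (W n : 𝕜) * f n := rfl

lemma schrL_symm (W : ℤ → ℝ) (hW) : (schrL 𝕜 W hW).IsSymmetric := by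
  intro f g
  have h1 : ∀ a : ℤ, inner 𝕜 (shiftL 𝕜 a f) g = inner 𝕜 f (shiftL 𝕜 (-a) g) := by
    intro a
    rw [lp.inner_eq_tsum, lp.inner_eq_tsum, ← Equiv.tsum_eq (Equiv.addRight (-a))]
    simp [shiftL_apply]
  simp only [schrL, LinearMap.add_apply, inner_add_left, inner_add_right, h1, neg_neg]
  rw [add_comm (inner 𝕜 f (shiftL 𝕜 1 g))]
  congr 1
  rw [lp.inner_eq_tsum, lp.inner_eq_tsum]
  congr 1
  ext n
  simp [mulL_apply]
  ring

/-- The Schrödinger operator on `ℓ²(ℤ; 𝕜)` as a bounded operator. -/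
def schrC (𝕜 : Type) [RCLike 𝕜] (W : ℤ → ℝ) (hW : ∃ C, ∀ n, |W n| ≤ C) :
    LTwo 𝕜 →L[𝕜] LTwo 𝕜 := ⟨schrL 𝕜 W hW, (schrL_symm W hW).continuous⟩

lemma schrC_selfAdjoint (W : ℤ → ℝ) (hW) : IsSelfAdjoint (schrC 𝕜 W hW) :=
  LinearMap.IsSymmetric.isSelfAdjoint (schrL_symm W hW)

lemma schrC_apply (W : ℤ → ℝ) (hW) (f : LTwo 𝕜) (n : ℤ) :
    schrC 𝕜 W hW f n = f (n - 1) + f (n + 1) + (W n : 𝕜) * f n :=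
  schrL_apply W hW f n

lemma norm_schrC_sq (W : ℤ → ℝ) (hW) (f : LTwo 𝕜) :
    ‖schrC 𝕜 W hW f‖ ^ 2 = N2 (schr W fun n => RCLike.re (f n)) +
      N2 (schr W fun n => RCLike.im (f n)) := by
  rw [LTwo.norm_sq]
  congr 2 <;> ext n <;> simp [schrC_apply, schr]

lemma schrC_ofSq (W : ℤ → ℝ) (hW) (f : ℤ → ℝ) (hf : Sq f) :
    ‖schrC 𝕜 W hW (ofSq 𝕜 f hf)‖ ^ 2 = N2 (schr W f) := by
  rw [norm_schrC_sq]
  simp [ofSq_apply, schr, N2]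

/-- A symmetric operator that is bounded below is bijective, since the orthogonal complement of
its (closed) range is its kernel. -/
lemma BddBelowOp.bijective {W : ℤ → ℝ} {c : ℝ} (hc : 0 < c) (h : BddBelowOp W c)
    (hW : ∃ C, ∀ n, |W n| ≤ C) : Function.Bijective (schrC 𝕜 W hW) := by
  have hb : ∀ f, Real.sqrt c * ‖f‖ ≤ ‖schrC 𝕜 W hW f‖ := by
    intro f
    refine le_of_sq_le_sq ?_ (norm_nonneg _)
    rw [mul_pow, Real.sq_sqrt hc.le, norm_schrC_sq, LTwo.norm_sq]
    nlinarith [h _ f.sq_re, h _ f.sq_im]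
  have hs : 0 < Real.sqrt c := Real.sqrt_pos.2 hc
  rw [ContinuousLinearMap.bijective_iff_dense_range_and_antilipschitz]
  constructor
  · rw [Submodule.topologicalClosure_eq_top_iff]
    refine (LinearMap.IsSymmetric.orthogonal_range (schrL_symm (𝕜 := 𝕜) W hW)).trans ?_
    rw [LinearMap.ker_eq_bot']
    intro f hf
    have h2 := hb f
    rw [show schrC 𝕜 W hW f = 0 from hf, norm_zero] at h2
    exact norm_le_zero_iff.1 (by nlinarith [norm_nonneg f])
  · refine ⟨⟨(Real.sqrt c)⁻¹, by positivity⟩, ?_⟩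
    refine ContinuousLinearMap.antilipschitz_of_bound _ fun f => ?_
    have := hb f
    change _ ≤ (Real.sqrt c)⁻¹ * _
    rw [inv_mul_eq_div, le_div_iff₀ hs]
    linarith

lemma bddBelowOp_of_forall {W : ℤ → ℝ} (hW : ∃ C, ∀ n, |W n| ≤ C) {K : ℝ} (hK : 0 < K)
    (h : ∀ f, ‖f‖ ≤ K * ‖schrC 𝕜 W hW f‖) : BddBelowOp W (K ^ 2)⁻¹ := by
  intro f hf
  have h1 := pow_le_pow_left₀ (norm_nonneg _) (h (ofSq 𝕜 f hf)) 2
  rw [mul_pow, schrC_ofSq, norm_ofSq] at h1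
  rw [inv_mul_eq_div, div_le_iff₀ (by positivity)]
  linarith

end

lemma bdd_sub {W : ℤ → ℝ} (hW : ∃ C, ∀ n, |W n| ≤ C) (E : ℝ) : ∃ C, ∀ n, |W n - E| ≤ C := by
  obtain ⟨C, hC⟩ := hW
  exact ⟨C + |E|, fun n => (abs_sub _ _).trans (by linarith [hC n])⟩

/-- For bounded potentials, `E` is outside the spectrum iff `H_W - E` is bounded below. -/
lemma notMem_spectrum_iff {W : ℤ → ℝ} (hW : ∃ C, ∀ n, |W n| ≤ C) (E : ℝ) :
    E ∉ SchrodingerSpectrum W ↔ ∃ c > 0, BddBelowOp (fun n => W n - E) c := by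
  have hWE := bdd_sub hW E
  simp only [SchrodingerSpectrum, mem_ofPred_eq, not_not]
  constructor
  · rintro ⟨T, hT⟩
    have hTA : ∀ f, T f = schrC ℝ _ hWE f := by
      intro f; ext n; rw [hT, schrC_apply]; simp
    have hbij : Function.Bijective (schrC ℝ _ hWE) := by
      convert T.bijective using 1
      ext1 f; exact (hTA f).symm
    obtain ⟨-, K, hK⟩ :=
      (ContinuousLinearMap.bijective_iff_dense_range_and_antilipschitz _).1 hbij
    refine ⟨_, ?_, bddBelowOp_of_forall (𝕜 := ℝ) hWE (K := K + 1) (by positivity) fun f => ?_⟩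
    · positivity
    · have := ZeroHomClass.bound_of_antilipschitz _ hK f
      nlinarith [norm_nonneg (schrC ℝ _ hWE f)]
  · rintro ⟨c, hc, h⟩
    refine ⟨LinearEquiv.ofBijective (schrC ℝ _ hWE).toLinearMap (h.bijective hc hWE), ?_⟩
    intro f n
    have := schrC_apply (𝕜 := ℝ) _ hWE f n
    simpa using this

lemma mem_spectrum_iff {W : ℤ → ℝ} (hW : ∃ C, ∀ n, |W n| ≤ C) (E : ℝ) :
    E ∈ SchrodingerSpectrum W ↔ ¬ ∃ c > 0, BddBelowOp (fun n => W n - E) c := by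
  rw [← notMem_spectrum_iff hW, not_not]

lemma isCompact_spectrum {W : ℤ → ℝ} (hW : ∃ C, ∀ n, |W n| ≤ C) :
    IsCompact (SchrodingerSpectrum W) := by
  rw [Metric.isCompact_iff_isClosed_bounded]
  constructor
  · rw [← isOpen_compl_iff, Metric.isOpen_iff]
    intro E hE
    obtain ⟨c, hc, h⟩ := (notMem_spectrum_iff hW E).1 hE
    refine ⟨Real.sqrt (c / 4), by positivity, fun E' hE' => ?_⟩
    refine (notMem_spectrum_iff hW E').2 ⟨c / 4, by positivity,
      h.perturb (d := Real.sqrt (c / 4)) (bdd_sub hW E') (fun n => ?_) ?_⟩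
    · rw [sub_sub_sub_cancel_left]
      exact (Metric.mem_ball.1 hE').le
    · rw [Real.sq_sqrt (by positivity)]; linarith
  · obtain ⟨C, hC⟩ := hW
    refine (Metric.isBounded_Icc (-(C + 4)) (C + 4)).subset fun E hE => ?_
    by_contra hcon
    refine (mem_spectrum_iff ⟨C, hC⟩ E).1 hE ⟨4, by norm_num,
      bddBelowOp_of_large (bdd_sub ⟨C, hC⟩ E) fun n => ?_⟩
    have h1 : C + 4 < |E| := by
      by_contra h2
      exact hcon (abs_le.1 (not_lt.1 h2))
    have := abs_sub_abs_le_abs_sub E (W n)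
    rw [abs_sub_comm] at this
    linarith [hC n]

end

/-! ### The spectrum is nonempty and has no isolated points -/

section

lemma schrC_sub (W : ℤ → ℝ) (hW : ∃ C, ∀ n, |W n| ≤ C) (t : ℝ) :
    schrC ℂ (fun n => W n - t) (bdd_sub hW t) =
      schrC ℂ W hW - algebraMap ℝ (LTwo ℂ →L[ℂ] LTwo ℂ) t := by
  ext f n
  rw [schrC_apply, _root_.sub_apply, lp.coeFn_sub, Pi.sub_apply, schrC_apply,
    Algebra.algebraMap_eq_smul_one]
  simp
  ring

/-- The spectrum of the complexified operator lies in the spectrum of the real one. -/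
lemma spectrum_schrC_subset (W : ℤ → ℝ) (hW : ∃ C, ∀ n, |W n| ≤ C) :
    spectrum ℝ (schrC ℂ W hW) ⊆ SchrodingerSpectrum W := by
  intro t ht
  by_contra hcon
  obtain ⟨c, hc, h⟩ := (notMem_spectrum_iff hW t).1 hcon
  have h1 := h.bijective (𝕜 := ℂ) hc (bdd_sub hW t)
  rw [← ContinuousLinearMap.isUnit_iff_bijective, schrC_sub] at h1
  rw [spectrum.mem_iff] at ht
  apply ht
  rw [← neg_sub]
  exact h1.neg

section
variable {H : Type} [NormedAddCommGroup H] [InnerProductSpace ℂ H] [CompleteSpace H]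

lemma selfAdjoint_spectrum_nonempty [Nontrivial H] (A : H →L[ℂ] H) (hA : IsSelfAdjoint A) :
    (spectrum ℝ A).Nonempty :=
  ContinuousFunctionalCalculus.spectrum_nonempty (R := ℝ) A hA

/-- If `0` is at most an isolated point of the spectrum of a self-adjoint operator `A`, then `A`
has a bounded generalized inverse, namely `x ↦ 1 / x` (extended by `0` at `0`) applied to `A`. -/
lemma selfAdjoint_genInverse (A : H →L[ℂ] H) (hsa : IsSelfAdjoint A) {δ : ℝ} (hδ : 0 < δ)
    (h : ∀ x ∈ spectrum ℝ A, x = 0 ∨ δ ≤ |x|) :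
    ∃ G : H →L[ℂ] H, ∀ f, A (G (A f)) = A f := by
  set g : ℝ → ℝ := fun x => x / max (x ^ 2) (δ ^ 2) with hg
  have hgc : Continuous g := by
    refine Continuous.div (by fun_prop) (by fun_prop) fun x => ?_
    have : δ ^ 2 ≤ max (x ^ 2) (δ ^ 2) := le_max_right _ _
    positivity
  refine ⟨cfc g A, fun f => ?_⟩
  have key : A * cfc g A * A = A := by
    have h1 : cfc (fun x => x * g x * x) A = A * cfc g A * A := by
      rw [cfc_mul (fun x => x * g x) (fun x => x) A (by fun_prop) (by fun_prop),
        cfc_mul (fun x => x) g A (by fun_prop) (by fun_prop), cfc_id' ℝ A]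
    rw [← h1]
    conv_rhs => rw [← cfc_id' ℝ A]
    refine cfc_congr fun x hx => ?_
    simp only [hg]
    rcases h x hx with h0 | h0
    · simp [h0]
    · have h2 : δ ^ 2 ≤ x ^ 2 := by rw [← sq_abs x]; exact pow_le_pow_left₀ hδ.le h0 2
      have h3 : x ≠ 0 := by rintro rfl; simp at h0; linarith
      rw [max_eq_left h2]
      field_simp
  exact congrArg (fun T : H →L[ℂ] H => T f) key

end

lemma spectrum_nonempty {W : ℤ → ℝ} (hW : ∃ C, ∀ n, |W n| ≤ C) :
    (SchrodingerSpectrum W).Nonempty := by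
  have : Nontrivial (LTwo ℂ) := ⟨⟨lp.single 2 0 1, 0, fun h => by
    have := congrArg (fun f : LTwo ℂ => f 0) h
    simp at this⟩⟩
  exact (selfAdjoint_spectrum_nonempty (schrC ℂ W hW)
    (schrC_selfAdjoint W hW)).mono (spectrum_schrC_subset W hW)

lemma exists_genInverse {W : ℤ → ℝ} (hW : ∃ C, ∀ n, |W n| ≤ C) {δ : ℝ} (hδ : 0 < δ)
    (h : ∀ x ∈ SchrodingerSpectrum W, x = 0 ∨ δ ≤ |x|) :
    ∃ G : LTwo ℂ →L[ℂ] LTwo ℂ, ∀ f,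
      schrC ℂ W hW (G (schrC ℂ W hW f)) = schrC ℂ W hW f :=
  selfAdjoint_genInverse _ (schrC_selfAdjoint W hW) hδ fun x hx =>
    h x (spectrum_schrC_subset W hW hx)

/-- A solution of the eigenvalue equation vanishing at `0` and `1` vanishes identically. -/
lemma ker_eq_zero {W : ℤ → ℝ} {u : ℤ → ℂ}
    (h : ∀ n, u (n - 1) + u (n + 1) + (W n : ℂ) * u n = 0) (h0 : u 0 = 0) (h1 : u 1 = 0) :
    ∀ n, u n = 0 := by
  have hp : ∀ n : ℕ, u n = 0 ∧ u (n + 1) = 0 := by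
    intro n
    induction n with
    | zero => simpa using ⟨h0, h1⟩
    | succ n ih =>
      refine ⟨by exact_mod_cast ih.2, ?_⟩
      have := h (n + 1)
      rw [add_sub_cancel_right, ih.1, ih.2] at this
      push_cast
      simpa using this
  have hm : ∀ n : ℕ, u (-n) = 0 ∧ u (-n + 1) = 0 := by
    intro n
    induction n with
    | zero => simpa using ⟨h0, h1⟩
    | succ n ih =>
      have := h (-n)
      rw [ih.1, ih.2] at this
      push_cast
      refine ⟨?_, ?_⟩
      · rw [show (-((n : ℤ) + 1)) = -n - 1 by ring]
        simpa using this
      · rw [show (-((n : ℤ) + 1) + 1) = -n by ring]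
        exact ih.1
  intro n
  obtain ⟨m, rfl | rfl⟩ := n.eq_nat_or_neg
  · exact (hp m).1
  · exact (hm m).1

lemma ker_bound {W : ℤ → ℝ} (hW : ∃ C, ∀ n, |W n| ≤ C) :
    ∃ κ : ℝ, 0 < κ ∧ ∀ u, schrC ℂ W hW u = 0 → ‖u‖ ≤ κ * max ‖u 0‖ ‖u 1‖ := by
  let F : Submodule ℂ (LTwo ℂ) := LinearMap.ker (schrL ℂ W hW)
  let ev : F →ₗ[ℂ] ℂ × ℂ :=
    { toFun := fun u => ((u : LTwo ℂ) 0, (u : LTwo ℂ) 1)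
      map_add' := fun u v => rfl
      map_smul' := fun c u => rfl }
  have hker : LinearMap.ker ev = ⊥ := by
    rw [LinearMap.ker_eq_bot']
    rintro ⟨u, hu⟩ h
    have h2 : u 0 = 0 ∧ u 1 = 0 := Prod.mk.inj h
    have : u = 0 := by
      ext n
      refine ker_eq_zero (W := W) (u := u) (fun n => ?_) h2.1 h2.2 n
      exact congrArg (fun f : LTwo ℂ => f n) (show schrL ℂ W hW u = 0 from hu)
    exact Subtype.ext this
  have : FiniteDimensional ℂ F := FiniteDimensional.of_injective ev (LinearMap.ker_eq_bot.1 hker)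
  obtain ⟨K, hK, hanti⟩ := LinearMap.exists_antilipschitzWith ev hker
  refine ⟨K, hK, fun u hu => ?_⟩
  exact ZeroHomClass.bound_of_antilipschitz ev hanti ⟨u, hu⟩

lemma norm_mulL_le {W : ℤ → ℝ} (hW : ∃ C, ∀ n, |W n| ≤ C) {ε : ℝ} (hε : 0 ≤ ε)
    (h : ∀ n, |W n| ≤ ε) (f : LTwo ℂ) : ‖mulL ℂ W hW f‖ ≤ ε * ‖f‖ := by
  refine le_of_sq_le_sq ?_ (by positivity)
  rw [mul_pow]
  refine hasSum_le (fun n => ?_) (mulL ℂ W hW f).hasSum (f.hasSum.mul_left (ε ^ 2))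
  rw [mulL_apply, norm_mul, mul_pow, RCLike.norm_ofReal]
  exact mul_le_mul_of_nonneg_right (pow_le_pow_left₀ (abs_nonneg _) (h n) 2) (sq_nonneg _)

/-- If `0` is isolated in the spectrum then it is an eigenvalue with a two-dimensional eigenspace
at most. Far translates of an eigenvector are almost eigenvectors, hence close to the eigenspace,
but they are tiny at the sites `0, 1` that determine eigenvectors. -/
lemma not_isolated_zero {W : ℤ → ℝ} (hW : ∃ C, ∀ n, |W n| ≤ C)
    (hT : ∀ ε > 0, ∃ N : ℕ, 0 < N ∧ ∀ n z : ℤ, |W (n + z * N) - W n| ≤ ε)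
    {δ : ℝ} (hδ : 0 < δ) (h0 : (0 : ℝ) ∈ SchrodingerSpectrum W)
    (h : ∀ x ∈ SchrodingerSpectrum W, x = 0 ∨ δ ≤ |x|) : False := by
  obtain ⟨G, hG⟩ := exists_genInverse hW hδ h
  obtain ⟨κ, hκ, hker⟩ := ker_bound hW
  set A := schrC ℂ W hW with hA
  have hproj : ∀ f, A (f - G (A f)) = 0 := fun f => by rw [map_sub, hG, sub_self]
  have hGn : ∀ f, ‖G f‖ ≤ ‖G‖ * ‖f‖ := G.le_opNorm
  -- an eigenvector exists, since otherwise `G` is a bounded left inverse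
  obtain ⟨u, hu, hu0⟩ : ∃ u, A u = 0 ∧ u ≠ 0 := by
    by_contra! hcon
    refine (mem_spectrum_iff hW 0).1 h0 ⟨((‖G‖ + 1) ^ 2)⁻¹, by positivity, ?_⟩
    simp only [sub_zero]
    refine bddBelowOp_of_forall (𝕜 := ℂ) hW (by positivity) fun f => ?_
    have h1 := hcon _ (hproj f)
    rw [sub_eq_zero] at h1
    calc ‖f‖ = ‖G (A f)‖ := by rw [← h1]
      _ ≤ ‖G‖ * ‖A f‖ := hGn _
      _ ≤ (‖G‖ + 1) * ‖A f‖ := by nlinarith [norm_nonneg (A f)]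
  have hup : 0 < ‖u‖ := norm_pos_iff.2 hu0
  set g := ‖G‖ with hg
  have hg0 : 0 ≤ g := norm_nonneg _
  set ε : ℝ := 1 / (2 * (κ * (1 + g) + g + 1)) with hε
  have hεp : 0 < ε := by positivity
  obtain ⟨N, hN, hper⟩ := hT ε hεp
  -- a far translate of `u` is small at the sites `0` and `1`
  obtain ⟨z, hz0, hz1⟩ : ∃ z : ℤ, ‖u (0 + z * N)‖ ≤ ε * ‖u‖ ∧ ‖u (1 + z * N)‖ ≤ ε * ‖u‖ := by
    have ht := u.hasSum.summable.tendsto_cofinite_zero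
    have hev := ht.eventually (gt_mem_nhds (show 0 < (ε * ‖u‖) ^ 2 by positivity))
    have hinj : ∀ a : ℤ, Function.Injective fun z : ℤ => a + z * N := by
      intro a x y hxy
      simpa [hN.ne'] using hxy
    have e0 := (hinj 0).tendsto_cofinite.eventually hev
    have e1 := (hinj 1).tendsto_cofinite.eventually hev
    obtain ⟨z, h1, h2⟩ := (e0.and e1).exists
    exact ⟨z, le_of_sq_le_sq h1.le (by positivity), le_of_sq_le_sq h2.le (by positivity)⟩
  set v := shiftL ℂ (z * N) u with hv
  have hvn : ‖v‖ = ‖u‖ := norm_shiftL _ _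
  have hbdd : ∃ C, ∀ n, |W n - W (n + z * N)| ≤ C := ⟨ε, fun n => by
    rw [abs_sub_comm]; exact hper n z⟩
  have hAv : A v = mulL ℂ _ hbdd v := by
    ext n
    have h1 : A u (n + z * N) = 0 := by rw [hu]; rfl
    rw [hA, schrC_apply] at h1
    rw [hA, schrC_apply, mulL_apply, hv]
    simp only [shiftL_apply]
    rw [show n - 1 + z * N = n + z * N - 1 by ring, show n + 1 + z * N = n + z * N + 1 by ring]
    push_cast
    simp at h1 ⊢
    linear_combination h1
  have hAvn : ‖A v‖ ≤ ε * ‖u‖ := by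
    rw [hAv, ← hvn]
    exact norm_mulL_le hbdd hεp.le (fun n => by rw [abs_sub_comm]; exact hper n z) v
  have hGA : ‖G (A v)‖ ≤ g * (ε * ‖u‖) :=
    (hGn _).trans (mul_le_mul_of_nonneg_left hAvn hg0)
  have hpt : ∀ n, ‖G (A v) n‖ ≤ g * (ε * ‖u‖) := fun n =>
    (lp.norm_apply_le_norm (by norm_num) _ n).trans hGA
  have hx := hker _ (hproj v)
  have hmax : max ‖(v - G (A v)) 0‖ ‖(v - G (A v)) 1‖ ≤ ε * ‖u‖ + g * (ε * ‖u‖) := by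
    refine max_le ?_ ?_ <;> rw [lp.coeFn_sub, Pi.sub_apply] <;>
      refine (norm_sub_le _ _).trans (add_le_add ?_ (hpt _))
    · exact hz0
    · exact hz1
  have hfin : ‖u‖ ≤ κ * (ε * ‖u‖ + g * (ε * ‖u‖)) + g * (ε * ‖u‖) := by
    calc ‖u‖ = ‖(v - G (A v)) + G (A v)‖ := by rw [sub_add_cancel, hvn]
      _ ≤ ‖v - G (A v)‖ + ‖G (A v)‖ := norm_add_le _ _
      _ ≤ _ := add_le_add (hx.trans (mul_le_mul_of_nonneg_left hmax hκ.le)) hGA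
  have h2 : ε * (2 * (κ * (1 + g) + g + 1)) = 1 := by
    rw [hε]; field_simp
  nlinarith

lemma mem_spectrum_shift {W : ℤ → ℝ} (hW : ∃ C, ∀ n, |W n| ≤ C) (E x : ℝ) :
    x ∈ SchrodingerSpectrum (fun n => W n - E) ↔ E + x ∈ SchrodingerSpectrum W := by
  rw [mem_spectrum_iff hW, mem_spectrum_iff (bdd_sub hW E)]
  simp only [sub_sub]

lemma preperfect_spectrum {W : ℤ → ℝ} (hW : ∃ C, ∀ n, |W n| ≤ C)
    (hT : ∀ ε > 0, ∃ N : ℕ, 0 < N ∧ ∀ n z : ℤ, |W (n + z * N) - W n| ≤ ε) :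
    Preperfect (SchrodingerSpectrum W) := by
  intro E hE
  rw [accPt_iff_nhds]
  by_contra! hcon
  obtain ⟨U, hU, hcon⟩ := hcon
  obtain ⟨δ, hδ, hball⟩ := Metric.mem_nhds_iff.1 hU
  refine not_isolated_zero (bdd_sub hW E) (fun ε hε => ?_) hδ
    ((mem_spectrum_shift hW E 0).2 (by simpa using hE)) fun x hx => ?_
  · obtain ⟨N, hN, h⟩ := hT ε hε
    exact ⟨N, hN, fun n z => by simpa using h n z⟩
  · by_contra! hx2
    have := hcon (E + x) ⟨hball (by simpa using hx2.2), (mem_spectrum_shift hW E x).1 hx⟩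
    exact hx2.1 (by linarith)

end

/-! ### Transfer matrices and hyperbolicity of periodic operators -/

section

/-- The one-step transfer matrix of `f (n+1) = y f n - f (n-1)`. -/
def tA (y : ℝ) : Matrix (Fin 2) (Fin 2) ℝ := !![y, -1; 1, 0]

lemma det_tA (y : ℝ) : (tA y).det = 1 := by simp [tA, Matrix.det_fin_two]

/-- Transfer matrix of `schr W f = 0` from site `n` over `j` steps. -/
def tm (W : ℤ → ℝ) (n : ℤ) : ℕ → Matrix (Fin 2) (Fin 2) ℝ
  | 0 => 1
  | j + 1 => tA (-W (n + j)) * tm W n j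

lemma det_tm (W : ℤ → ℝ) (n : ℤ) (j : ℕ) : (tm W n j).det = 1 := by
  induction j with
  | zero => simp [tm]
  | succ j ih => rw [tm, Matrix.det_mul, ih, det_tA, one_mul]

lemma tm_succ' (W : ℤ → ℝ) (n : ℤ) (j : ℕ) : tm W n (j + 1) = tm W (n + 1) j * tA (-W n) := by
  induction j with
  | zero => simp [tm]
  | succ j ih =>
    rw [tm, ih, tm, Matrix.mul_assoc]
    congr 4
    push_cast; ring

lemma tm_periodic {W : ℤ → ℝ} {N : ℕ} (hper : ∀ n, W (n + N) = W n) (n : ℤ) (j : ℕ) :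
    tm W (n + N) j = tm W n j := by
  induction j with
  | zero => rfl
  | succ j ih =>
    rw [tm, tm, ih, ← hper (n + j)]
    congr 4
    ring

/-- Monodromy matrices based at different sites are conjugate, so they share their trace. -/
lemma trace_tm {W : ℤ → ℝ} {N : ℕ} (hper : ∀ n, W (n + N) = W n) (n : ℤ) :
    (tm W n N).trace = (tm W 0 N).trace := by
  have step : ∀ n, (tm W (n + 1) N).trace = (tm W n N).trace := by
    intro n
    have h1 : tm W (n + 1) N * tA (-W n) = tA (-W n) * tm W n N := by
      rw [← tm_succ', tm, hper]
    have hu : IsUnit (tA (-W n)).det := by rw [det_tA]; exact isUnit_one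
    have h2 : tm W (n + 1) N = tA (-W n) * tm W n N * (tA (-W n))⁻¹ := by
      rw [← h1, Matrix.mul_assoc, Matrix.mul_nonsing_inv _ hu, Matrix.mul_one]
    rw [h2, Matrix.trace_mul_comm, ← Matrix.mul_assoc, Matrix.nonsing_inv_mul _ hu, Matrix.one_mul]
  induction n using Int.induction_on with
  | zero => rfl
  | succ i ih => rw [step, ih]
  | pred i ih => rw [← ih, ← step, sub_add_cancel]

/-- The state vector `(f n, f (n-1))`. -/
def stv (f : ℤ → ℝ) (n : ℤ) : Fin 2 → ℝ := ![f n, f (n - 1)]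

/-- The accumulated inhomogeneity after `j` steps from site `n`. -/
def rem (W h : ℤ → ℝ) (n : ℤ) : ℕ → Fin 2 → ℝ
  | 0 => 0
  | j + 1 => (tA (-W (n + j))).mulVec (rem W h n j) + ![h (n + j), 0]

lemma stv_add (W f : ℤ → ℝ) (n : ℤ) (j : ℕ) :
    stv f (n + j) = (tm W n j).mulVec (stv f n) + rem W (schr W f) n j := by
  induction j with
  | zero => simp [tm, rem]
  | succ j ih =>
    rw [tm, rem, ← Matrix.mulVec_mulVec, ← add_assoc, ← Matrix.mulVec_add, ← ih]
    have e : n + ((j + 1 : ℕ) : ℤ) = n + j + 1 := by push_cast; ring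
    rw [e]
    ext i
    fin_cases i
    · simp [stv, tA, schr]
      ring
    · simp [stv, tA]

lemma norm_tA_mulVec {y B : ℝ} (hy : |y| ≤ B) (v : Fin 2 → ℝ) :
    ‖(tA y).mulVec v‖ ≤ (B + 1) * ‖v‖ := by
  have hB : 0 ≤ B := (abs_nonneg y).trans hy
  have h0 := norm_le_pi_norm v 0
  have h1 := norm_le_pi_norm v 1
  rw [pi_norm_le_iff_of_nonneg (by positivity)]
  intro i
  fin_cases i
  · simp only [tA, Matrix.mulVec, dotProduct, Fin.sum_univ_two]
    simp
    calc |y * v 0 + -v 1| ≤ |y * v 0| + |-v 1| := abs_add_le _ _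
      _ = |y| * |v 0| + |v 1| := by rw [abs_mul, abs_neg]
      _ ≤ B * ‖v‖ + ‖v‖ := by
        gcongr
        · exact h0
        · exact h1
      _ = _ := by ring
  · simp [tA, Matrix.mulVec, dotProduct, Fin.sum_univ_two]
    have : |v 0| ≤ ‖v‖ := h0
    nlinarith [norm_nonneg v]

lemma norm_tm_mulVec {W : ℤ → ℝ} {B : ℝ} (hW : ∀ n, |W n| ≤ B) (n : ℤ) (j : ℕ) (v : Fin 2 → ℝ) :
    ‖(tm W n j).mulVec v‖ ≤ (B + 1) ^ j * ‖v‖ := by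
  have hB : 0 ≤ B := (abs_nonneg _).trans (hW 0)
  induction j with
  | zero => simp [tm]
  | succ j ih =>
    rw [tm, ← Matrix.mulVec_mulVec]
    calc _ ≤ (B + 1) * ‖(tm W n j).mulVec v‖ := norm_tA_mulVec (by rw [abs_neg]; exact hW _) _
      _ ≤ (B + 1) * ((B + 1) ^ j * ‖v‖) := by gcongr
      _ = _ := by ring

lemma norm_rem {W : ℤ → ℝ} {B : ℝ} (hW : ∀ n, |W n| ≤ B) (h : ℤ → ℝ) (n : ℤ) (j : ℕ) :
    ‖rem W h n j‖ ≤ (B + 1) ^ j * ∑ l ∈ Finset.range j, |h (n + l)| := by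
  have hB : 0 ≤ B := (abs_nonneg _).trans (hW 0)
  induction j with
  | zero => simp [rem]
  | succ j ih =>
    rw [rem, Finset.sum_range_succ]
    have h1 : ‖![h (n + j), 0]‖ ≤ |h (n + j)| := by
      rw [pi_norm_le_iff_of_nonneg (abs_nonneg _)]
      intro i; fin_cases i <;> simp
    have h2 : (1:ℝ) ≤ (B + 1) ^ (j + 1) := one_le_pow₀ (by linarith)
    calc _ ≤ ‖(tA (-W (n + j))).mulVec (rem W h n j)‖ + ‖![h (n + j), 0]‖ := norm_add_le _ _
      _ ≤ (B + 1) * ((B + 1) ^ j * ∑ l ∈ Finset.range j, |h (n + l)|) + 1 * |h (n + j)| := by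
        gcongr
        · have hy : |-W (n + j)| ≤ B := by rw [abs_neg]; exact hW _
          exact (norm_tA_mulVec hy _).trans (mul_le_mul_of_nonneg_left ih (by linarith))
        · linarith
      _ ≤ (B + 1) * ((B + 1) ^ j * ∑ l ∈ Finset.range j, |h (n + l)|)
          + (B + 1) ^ (j + 1) * |h (n + j)| := by gcongr
      _ = _ := by ring

/-- Cayley–Hamilton for a `2 × 2` matrix of determinant one, applied to a vector. -/
lemma cayley_two {M : Matrix (Fin 2) (Fin 2) ℝ} (h : M.det = 1) (v : Fin 2 → ℝ) :
    M.mulVec (M.mulVec v) = M.trace • M.mulVec v - v := by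
  rw [Matrix.det_fin_two] at h
  ext i
  fin_cases i
  · simp [Matrix.mulVec, dotProduct, Fin.sum_univ_two, Matrix.trace_fin_two]
    linear_combination (- v 0) * h
  · simp [Matrix.mulVec, dotProduct, Fin.sum_univ_two, Matrix.trace_fin_two]
    linear_combination (- v 1) * h

/-- A three-term relation over two periods: sequences `f` nearly satisfy
`f (n + 2 * N) - t f (n + N) + f n = 0`, with an error controlled by `schr W f` nearby. -/
lemma three_term {W : ℤ → ℝ} {N : ℕ} {B : ℝ} (hW : ∀ n, |W n| ≤ B)
    (hper : ∀ n, W (n + N) = W n) :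
    ∃ C > 0, ∀ (f : ℤ → ℝ) (n : ℤ),
      |f (n + N + N) - (tm W 0 N).trace * f (n + N) + f n|
        ≤ C * ∑ l ∈ Finset.range (2 * N), |schr W f (n + l)| := by
  have hB : 0 ≤ B := (abs_nonneg _).trans (hW 0)
  set t := (tm W 0 N).trace with ht
  set D := (B + 1) ^ N with hD
  have hDp : 0 < D := by positivity
  refine ⟨D + D * D + |t| * D, by positivity, fun f n => ?_⟩
  set h := schr W f with hh
  have key : stv f (n + N + N) - t • stv f (n + N) + stv f n
      = rem W h (n + N) N + (tm W n N).mulVec (rem W h n N) - t • rem W h n N := by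
    rw [stv_add W f (n + N) N, tm_periodic hper, stv_add W f n N, Matrix.mulVec_add,
      cayley_two (det_tm W n N), trace_tm hper, smul_add, ← ht]
    abel
  have h0 : f (n + N + N) - t * f (n + N) + f n
      = (rem W h (n + N) N + (tm W n N).mulVec (rem W h n N) - t • rem W h n N) 0 := by
    rw [← key]; simp [stv]
  set S := ∑ l ∈ Finset.range (2 * N), |h (n + l)| with hS
  have hS1 : ∑ l ∈ Finset.range N, |h (n + l)| ≤ S := by
    apply Finset.sum_le_sum_of_subset_of_nonneg
    · intro i; simp; omega
    · intros; positivity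
  have hS2 : ∑ l ∈ Finset.range N, |h (n + N + l)| ≤ S := by
    rw [hS, two_mul, Finset.sum_range_add]
    have : 0 ≤ ∑ l ∈ Finset.range N, |h (n + l)| := Finset.sum_nonneg fun _ _ => abs_nonneg _
    have e : ∑ l ∈ Finset.range N, |h (n + N + l)|
        = ∑ l ∈ Finset.range N, |h (n + ((N + l : ℕ) : ℤ))| := by
      apply Finset.sum_congr rfl; intro l _; congr 2; push_cast; ring
    rw [e]; linarith
  have r1 : ‖rem W h (n + N) N‖ ≤ D * S := (norm_rem hW h (n + N) N).trans (by gcongr)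
  have r2 : ‖rem W h n N‖ ≤ D * S := (norm_rem hW h n N).trans (by gcongr)
  rw [h0, ← Real.norm_eq_abs]
  calc _ ≤ ‖rem W h (n + N) N + (tm W n N).mulVec (rem W h n N) - t • rem W h n N‖ :=
        norm_le_pi_norm _ 0
    _ ≤ ‖rem W h (n + N) N‖ + ‖(tm W n N).mulVec (rem W h n N)‖ + ‖t • rem W h n N‖ :=
        (norm_sub_le _ _).trans (by gcongr; exact norm_add_le _ _)
    _ ≤ D * S + D * (D * S) + |t| * (D * S) := by
        gcongr
        · exact (norm_tm_mulVec hW n N _).trans (by gcongr)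
        · rw [norm_smul, Real.norm_eq_abs]; gcongr
    _ = _ := by ring

/-- A hyperbolic monodromy matrix makes the periodic operator bounded below. -/
lemma bddBelowOp_of_trace {W : ℤ → ℝ} {N : ℕ} (hW : ∃ C, ∀ n, |W n| ≤ C)
    (hper : ∀ n, W (n + N) = W n) (ht : 2 < |(tm W 0 N).trace|) :
    ∃ c > 0, BddBelowOp W c := by
  obtain ⟨B, hB⟩ := hW
  obtain ⟨C, hC, hf3⟩ := three_term hB hper
  set t := (tm W 0 N).trace
  have ht2 : 4 < t ^ 2 := by rw [← sq_abs]; nlinarith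
  set η := (t ^ 2 - 4) / 8 with hη
  have hηp : 0 < η := by rw [hη]; linarith
  set D := (1 + 1 / η) * (C ^ 2 * ((2 * N : ℕ) * (2 * N : ℕ)) + 1) with hD
  have hDp : 0 < D := by positivity
  refine ⟨(t ^ 2 - 4) / 2 / D, div_pos (by linarith) hDp, fun f hf => ?_⟩
  set h := schr W f with hh
  have hhs : Sq h := (schr_bound hB hf).1
  have hsum : HasSum (fun n => ∑ l ∈ Finset.range (2 * N), h (n + l) ^ 2) ((2 * N : ℕ) * N2 h) := by
    have := hasSum_sum (s := Finset.range (2 * N)) (f := fun l n => h (n + (l : ℕ)) ^ 2)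
      (a := fun _ => N2 h) (fun l _ => hhs.hasSum_shift l)
    simpa using this
  have main := (sq_of_le (f := fun n => t * f (n + N))
    ((((hf.hasSum_shift (N + N)).mul_left (2 * (1 + η))).add
      ((hf.hasSum_shift 0).mul_left (2 * (1 + η)))).add
      (hsum.mul_left ((1 + 1 / η) * (C ^ 2 * (2 * N : ℕ))))) fun n => ?_).2
  · have e : N2 (fun n => t * f (n + N)) = t ^ 2 * N2 f := by
      rw [← N2_shift hf N]; simp only [N2, mul_pow]; rw [tsum_mul_left]
    rw [e] at main
    have hN := N2_nonneg h
    have : (t ^ 2 - 4) / 2 * N2 f ≤ D * N2 h := by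
      have e2 : 0 < 1 + 1 / η := by positivity
      have e3 : D * N2 h = (1 + 1 / η) * (C ^ 2 * (2 * N : ℕ)) * ((2 * N : ℕ) * N2 h)
        + (1 + 1 / η) * N2 h := by rw [hD]; ring
      have e4 : 0 ≤ (1 + 1 / η) * N2 h := by positivity
      have e5 : 2 * (1 + η) * N2 f + 2 * (1 + η) * N2 f = (t ^ 2 - (t ^ 2 - 4) / 2) * N2 f := by
        rw [hη]; ring
      rw [e3]
      linarith
    rw [div_mul_eq_mul_div, div_le_iff₀ hDp]
    linarith
  · have h1 := hf3 f n
    set G := f (n + N + N) - t * f (n + N) + f n with hG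
    have h2 : G ^ 2 ≤ C ^ 2 * ((2 * N : ℕ) * ∑ l ∈ Finset.range (2 * N), h (n + l) ^ 2) := by
      have h3 : G ^ 2 ≤ (C * ∑ l ∈ Finset.range (2 * N), |h (n + l)|) ^ 2 :=
        sq_le_sq' (by linarith [abs_le.1 h1]) (abs_le.1 h1).2
      have h4 := sq_sum_le_card_mul_sum_sq (s := Finset.range (2 * N))
        (f := fun l => |h (n + (l : ℕ))|)
      simp only [Finset.card_range, sq_abs] at h4
      rw [mul_pow] at h3
      exact h3.trans (by gcongr)
    have e1 : t * f (n + N) = (f (n + N + N) + f n) - G := by rw [hG]; ring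
    have e2 : ∀ a b g : ℝ, (a + b - g) ^ 2 ≤ 2 * (1 + η) * a ^ 2 + 2 * (1 + η) * b ^ 2
        + (1 + 1 / η) * g ^ 2 := by
      intro a b g
      have h5 : (1 + η) * (a + b) ^ 2 + (1 + 1 / η) * g ^ 2 - (a + b - g) ^ 2
          = (η * (a + b) + g) ^ 2 / η := by field_simp; ring
      have h6 : 0 ≤ (η * (a + b) + g) ^ 2 / η := by positivity
      nlinarith [sq_nonneg (a - b)]
    rw [e1]
    have h7 := e2 (f (n + N + N)) (f n) G
    have h8 : (1 + 1 / η) * G ^ 2 ≤ (1 + 1 / η) *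
      (C ^ 2 * ((2 * N : ℕ) * ∑ l ∈ Finset.range (2 * N), h (n + l) ^ 2)) := by gcongr
    simp only [add_zero, ← add_assoc]
    linarith

end

/-! ### Opening gaps: hyperbolic words near a given word -/

section

/-- Real `2 × 2` matrices. -/
abbrev M2 := Matrix (Fin 2) (Fin 2) ℝ

/-- Transfer matrix over a word whose letters are repeated `k` times; the first letter acts
first. -/
def wp (k : ℕ) : List ℝ → M2
  | [] => 1
  | a :: l => wp k l * tA a ^ k

lemma wp_append (k : ℕ) (l l' : List ℝ) : wp k (l ++ l') = wp k l' * wp k l := by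
  induction l with
  | nil => simp [wp]
  | cons a l ih => simp only [List.cons_append, wp, ih, mul_assoc]

lemma det_wp (k : ℕ) (l : List ℝ) : (wp k l).det = 1 := by
  induction l with
  | nil => simp [wp]
  | cons a l ih => rw [wp, Matrix.det_mul, ih, Matrix.det_pow, det_tA, one_pow, one_mul]

/-- The centralizer of an elliptic matrix inside `SL₂(ℝ)` is bounded. -/
lemma centralizer_bound {X : M2} (hX : X.det = 1) (ht : |X.trace| < 2) :
    ∃ K : ℝ, ∀ M : M2, M.det = 1 → M * X = X * M → ∀ i j, |M i j| ≤ K := by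
  rw [Matrix.det_fin_two] at hX
  rw [Matrix.trace_fin_two, abs_lt] at ht
  set a := X 0 0
  set b := X 0 1
  set c := X 1 0
  set d := X 1 1
  have hT : 0 < 4 - (a + d) ^ 2 := by nlinarith
  have hc : c ≠ 0 := by
    intro h
    rw [h] at hX
    nlinarith [sq_nonneg (a - d)]
  set κ := 4 / (4 - (a + d) ^ 2) + 1 with hκ
  have hκ1 : 1 ≤ κ := by rw [hκ]; have : 0 < 4 / (4 - (a + d) ^ 2) := by positivity
                         linarith
  refine ⟨2 + κ * (|a - d| + |b| + |c|), fun M hM hcomm => ?_⟩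
  rw [Matrix.det_fin_two] at hM
  have h00 := congrFun (congrFun hcomm 0) 0
  have h10 := congrFun (congrFun hcomm 1) 0
  have h01 := congrFun (congrFun hcomm 0) 1
  simp only [Matrix.mul_apply, Fin.sum_univ_two] at h00 h10 h01
  change M 0 0 * a + M 0 1 * c = a * M 0 0 + b * M 1 0 at h00
  change M 1 0 * a + M 1 1 * c = c * M 0 0 + d * M 1 0 at h10
  set m := M 0 0
  set n := M 0 1
  set p := M 1 0
  set r := M 1 1
  obtain ⟨s, hs⟩ : ∃ s, p = s * c := ⟨p / c, by field_simp⟩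
  have hn : n = s * b := mul_right_cancel₀ hc (by rw [hs] at h00; linarith)
  have hmr : m - r = s * (a - d) := mul_right_cancel₀ hc (by rw [hs] at h10; linarith)
  have hq : (m + r) ^ 2 + s ^ 2 * (4 - (a + d) ^ 2) = 4 := by
    have e1 : (m + r) ^ 2 = (m - r) ^ 2 + 4 * (m * r) := by ring
    have e2 : m * r = 1 + n * p := by linarith
    rw [e1, e2, hmr, hn, hs]
    linear_combination (-4 * s ^ 2) * hX
  have hw : |m + r| ≤ 2 := by
    rw [abs_le]; constructor <;> nlinarith [sq_nonneg s, mul_nonneg (sq_nonneg s) hT.le]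
  have hs2 : s ^ 2 ≤ κ - 1 := by
    rw [hκ, add_sub_cancel_right, le_div_iff₀ hT]; nlinarith [sq_nonneg (m + r)]
  have hsk : |s| ≤ κ := by
    rw [abs_le]; constructor <;> nlinarith [sq_nonneg (s - 1), sq_nonneg (s + 1)]
  have g : ∀ z, |s * z| ≤ κ * |z| := fun z => by rw [abs_mul]; gcongr
  have ga := g (a - d)
  have gb := g b
  have gc := g c
  have na : 0 ≤ κ * |a - d| := by positivity
  have nb : 0 ≤ κ * |b| := by positivity
  have nc : 0 ≤ κ * |c| := by positivity
  rw [← hmr] at ga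
  rw [← hn] at gb
  rw [← hs] at gc
  rw [abs_le] at hw ga
  intro i j
  fin_cases i <;> fin_cases j
  · change |m| ≤ _; rw [abs_le]; constructor <;> linarith
  · change |n| ≤ _; linarith
  · change |p| ≤ _; linarith
  · change |r| ≤ _; rw [abs_le]; constructor <;> linarith

/-- The inverse (adjugate) of an elliptic matrix is a limit of its positive powers. -/
lemma adjugate_mem_closure {X : M2} (hX : X.det = 1) (ht : |X.trace| < 2)
    (S : Set M2) (hS : ∀ n : ℕ, 0 < n → X ^ n ∈ S) : X.adjugate ∈ closure S := by
  obtain ⟨K, hK⟩ := centralizer_bound hX ht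
  have hb : ∀ n : ℕ, ∀ i j, |(X ^ n) i j| ≤ K := fun n =>
    hK _ (by rw [Matrix.det_pow, hX, one_pow]) (by rw [← pow_succ, ← pow_succ'])
  have hcpt : IsCompact {M : Fin 2 → Fin 2 → ℝ | ∀ i j, |M i j| ≤ K} := by
    have : {M : Fin 2 → Fin 2 → ℝ | ∀ i j, |M i j| ≤ K}
        = Set.pi univ fun _ => Set.pi univ fun _ => Icc (-K) K := by
      ext M; simp only [Set.mem_ofPred_eq, abs_le, Set.mem_pi, Set.mem_univ, true_imp_iff, Set.mem_Icc]
    rw [this]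
    exact isCompact_univ_pi fun _ => isCompact_univ_pi fun _ => isCompact_Icc
  obtain ⟨L, -, φ, hφ, hL⟩ := hcpt.tendsto_subseq (x := fun n => (fun i j => (X ^ n) i j : Fin 2 → Fin 2 → ℝ)) hb
  obtain ⟨L, rfl⟩ : ∃ L' : M2, L = fun i j => L' i j := ⟨L, rfl⟩
  have hL' : Filter.Tendsto (fun j => X ^ φ j) Filter.atTop (nhds L) := hL
  have hadj : Continuous fun M : M2 => M.adjugate := continuous_id.matrix_adjugate
  have hdet : Continuous fun M : M2 => M.det := continuous_id.matrix_det
  have hLd : Matrix.det L = 1 := by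
    have h1 := (hdet.tendsto L).comp hL'
    have h2 : (fun M : M2 => M.det) ∘ (fun j => X ^ φ j) = fun _ => 1 := by
      funext j; simp [hX]
    rw [h2] at h1
    exact tendsto_nhds_unique h1 tendsto_const_nhds
  have hlim : Filter.Tendsto
      (fun j => X ^ φ (j + 2) * (X ^ φ j).adjugate * X.adjugate) Filter.atTop
      (nhds (L * L.adjugate * X.adjugate)) :=
    ((hL'.comp (Filter.tendsto_add_atTop_nat 2)).mul ((hadj.tendsto L).comp hL')).mul
      tendsto_const_nhds
  rw [Matrix.mul_adjugate, hLd, one_smul, one_mul] at hlim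
  refine mem_closure_of_tendsto hlim (Filter.Eventually.of_forall fun j => ?_)
  have h1 : φ j + 2 ≤ φ (j + 2) := by
    have a1 : φ j < φ (j + 1) := hφ (by omega)
    have a2 : φ (j + 1) < φ (j + 2) := hφ (by omega)
    omega
  obtain ⟨m, hm⟩ := Nat.exists_eq_add_of_le h1
  have e : X ^ φ (j + 2) = X ^ (m + 1) * X * X ^ φ j := by
    rw [hm, ← pow_succ, ← pow_add]; congr 1; omega
  have e2 : X ^ φ (j + 2) * (X ^ φ j).adjugate * X.adjugate = X ^ (m + 1) := by
    rw [e, mul_assoc (X ^ (m + 1) * X), Matrix.mul_adjugate, Matrix.det_pow, hX, one_pow, one_smul,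
      mul_one, mul_assoc, Matrix.mul_adjugate, hX, one_smul, mul_one]
  rw [e2]
  exact hS _ (by omega)

lemma det_commutator {X Y : M2} (hX : X.det = 1) (hY : Y.det = 1) :
    (X * Y - Y * X).det = 2 - (X * Y * (X.adjugate * Y.adjugate)).trace := by
  rw [Matrix.det_fin_two] at hX hY
  simp only [Matrix.det_fin_two, Matrix.trace_fin_two, Matrix.mul_apply, Fin.sum_univ_two,
    Matrix.sub_apply, Matrix.adjugate_fin_two, Matrix.of_apply, Matrix.cons_val', Matrix.cons_val_zero,
    Matrix.cons_val_one, Matrix.cons_val_fin_one]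
  have : (2:ℝ) = 2 * ((X 0 0 * X 1 1 - X 0 1 * X 1 0) * (Y 0 0 * Y 1 1 - Y 0 1 * Y 1 0)) := by
    rw [hX, hY]; ring
  rw [this]; ring

/-- Elliptic elements of a matrix semigroup with all traces in `[-2, 2]` commute: inverses of
elliptic elements are limits of semigroup elements, so the commutator also has trace at most `2`
and `det_commutator` applies. -/
lemma elliptic_commute (S : Subsemigroup M2) (htr : ∀ M ∈ S, |M.trace| ≤ 2)
    {X Y : M2} (hXS : X ∈ S) (hYS : Y ∈ S) (hX : X.det = 1) (hY : Y.det = 1)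
    (hXt : |X.trace| < 2) (hYt : |Y.trace| < 2) : X * Y = Y * X := by
  have hpow : ∀ Z ∈ S, ∀ n : ℕ, 0 < n → Z ^ n ∈ (S : Set M2) := by
    intro Z hZ n hn
    induction n with
    | zero => omega
    | succ n ih =>
      rcases Nat.eq_zero_or_pos n with h | h
      · subst h; simpa using hZ
      · rw [pow_succ]; exact S.mul_mem (ih h) hZ
  have hXi := adjugate_mem_closure hX hXt S (hpow X hXS)
  have hYi := adjugate_mem_closure hY hYt S (hpow Y hYS)
  have hmem : X * Y * (X.adjugate * Y.adjugate) ∈ closure (S : Set M2) := by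
    have h1 : X ∈ S.topologicalClosure := subset_closure hXS
    have h2 : Y ∈ S.topologicalClosure := subset_closure hYS
    exact S.topologicalClosure.mul_mem (S.topologicalClosure.mul_mem h1 h2)
      (S.topologicalClosure.mul_mem hXi hYi)
  have htr2 : (X * Y * (X.adjugate * Y.adjugate)).trace ≤ 2 := by
    have hcl : IsClosed {M : M2 | M.trace ≤ 2} :=
      isClosed_le (continuous_id.matrix_trace) continuous_const
    exact closure_minimal (fun M hM => (abs_le.1 (htr M hM)).2) hcl hmem
  have hdet : 0 ≤ (X * Y - Y * X).det := by rw [det_commutator hX hY]; linarith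
  set Z := X * Y - Y * X with hZ
  have z11 : Z 1 1 = - Z 0 0 := by
    simp [hZ, Matrix.mul_apply, Fin.sum_univ_two]; ring
  have hXZ : (X 0 0 - X 1 1) * Z 0 0 + X 0 1 * Z 1 0 + X 1 0 * Z 0 1 = 0 := by
    simp [hZ, Matrix.mul_apply, Fin.sum_univ_two]; ring
  rw [Matrix.det_fin_two] at hX hdet
  rw [Matrix.trace_fin_two, abs_lt] at hXt
  rw [z11] at hdet
  have hdisc : (X 0 0 - X 1 1) ^ 2 + 4 * (X 0 1 * X 1 0) < 0 := by nlinarith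
  have hbc : X 0 1 * X 1 0 < 0 := by nlinarith [sq_nonneg (X 0 0 - X 1 1)]
  have hb : X 0 1 ≠ 0 := fun h => by rw [h] at hbc; simp at hbc
  have hc : X 1 0 ≠ 0 := fun h => by rw [h] at hbc; simp at hbc
  generalize X 0 1 = b at *
  generalize X 1 0 = c at *
  generalize X 0 0 - X 1 1 = e at *
  have hz1 : Z 0 0 = 0 := by
    have h1 : -(b * c) * Z 0 0 ^ 2 ≤ (b * Z 1 0) * (c * Z 0 1) := by
      have : 0 ≤ -(b * c) * (- Z 0 0 ^ 2 - Z 0 1 * Z 1 0) :=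
        mul_nonneg (by linarith) (by linarith)
      linarith
    have h2 : (b * Z 1 0 + c * Z 0 1) ^ 2 = e ^ 2 * Z 0 0 ^ 2 := by
      have : b * Z 1 0 + c * Z 0 1 = - (e * Z 0 0) := by linarith
      rw [this]; ring
    have h3 : 0 ≤ (e ^ 2 + 4 * (b * c)) * Z 0 0 ^ 2 := by
      nlinarith [sq_nonneg (b * Z 1 0 - c * Z 0 1)]
    by_contra h
    have : 0 < Z 0 0 ^ 2 := by positivity
    nlinarith
  rw [hz1] at hXZ hdet
  have hz23 : Z 0 1 * Z 1 0 ≤ 0 := by linarith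
  have h4 : c * Z 0 1 = - (b * Z 1 0) := by linarith
  have h5 : (b * Z 1 0) ^ 2 ≤ 0 := by
    have : (b * c) * (Z 0 1 * Z 1 0) = -(b * Z 1 0) ^ 2 := by
      linear_combination (b * Z 1 0) * h4
    nlinarith
  have h6 : b * Z 1 0 = 0 := by nlinarith [sq_nonneg (b * Z 1 0)]
  have hz3 : Z 1 0 = 0 := (mul_eq_zero.1 h6).resolve_left hb
  have hz2 : Z 0 1 = 0 := (mul_eq_zero.1 (by rw [h4, h6, neg_zero])).resolve_left hc
  have hZ0 : Z = 0 := by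
    ext i j
    fin_cases i <;> fin_cases j <;> simp [hz1, hz2, hz3, z11]
  exact sub_eq_zero.1 hZ0

/-- A cone condition preserved by transfer matrices of large letters. -/
def InCone (M : M2) : Prop :=
  1 ≤ M 0 0 ∧ 0 ≤ M 1 0 ∧ M 1 0 ≤ M 0 0 ∧ 0 ≤ M 1 0 + M 1 1 ∧ M 1 0 + M 1 1 ≤ M 0 0 + M 0 1

lemma inCone_one : InCone 1 := by simp [InCone]

lemma tA_mul_entries (y : ℝ) (M : M2) :
    (tA y * M) 0 0 = y * M 0 0 - M 1 0 ∧ (tA y * M) 0 1 = y * M 0 1 - M 1 1 ∧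
    (tA y * M) 1 0 = M 0 0 ∧ (tA y * M) 1 1 = M 0 1 := by
  simp [tA, Matrix.mul_apply, Fin.sum_univ_two, sub_eq_add_neg]

lemma InCone.tA_mul {M : M2} (h : InCone M) {y : ℝ} (hy : 2 ≤ y) :
    InCone (tA y * M) ∧ (y - 1) ≤ (tA y * M) 0 0 ∧ (y - 2) ≤ (tA y * M).trace := by
  obtain ⟨h1, h2, h3, h4, h5⟩ := h
  obtain ⟨e1, e2, e3, e4⟩ := tA_mul_entries y M
  rw [InCone, Matrix.trace_fin_two, e1, e2, e3, e4]
  refine ⟨⟨?_, ?_, ?_, ?_, ?_⟩, ?_, ?_⟩ <;> nlinarith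

lemma InCone.pow_mul {M : M2} (h : InCone M) {y : ℝ} (hy : 2 ≤ y) (k : ℕ) : InCone (tA y ^ k * M) := by
  induction k with
  | zero => simpa using h
  | succ k ih => rw [pow_succ', mul_assoc]; exact (ih.tA_mul hy).1

lemma InCone.pow_mul_trace {M : M2} (h : InCone M) {y : ℝ} (hy : 5 ≤ y) {k : ℕ} (hk : 0 < k) :
    InCone (tA y ^ k * M) ∧ 3 ≤ (tA y ^ k * M).trace := by
  obtain ⟨k, rfl⟩ := Nat.exists_eq_succ_of_ne_zero hk.ne'
  rw [Nat.succ_eq_add_one, pow_succ', mul_assoc]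
  have := (h.pow_mul (by linarith : 2 ≤ y) k).tA_mul (by linarith : 2 ≤ y)
  exact ⟨this.1, by linarith [this.2.2]⟩

lemma wp_trace_large {k : ℕ} (hk : 0 < k) {l : List ℝ} (hl : ∀ y ∈ l, 5 ≤ y) (h0 : l ≠ []) :
    3 ≤ (wp k l).trace := by
  have key : ∀ l : List ℝ, (∀ y ∈ l, 5 ≤ y) → ∀ M : M2, InCone M ∧ 3 ≤ M.trace →
      InCone (wp k l * M) ∧ 3 ≤ (wp k l * M).trace := by
    intro l
    induction l with
    | nil => intro _ M hM; simpa [wp] using hM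
    | cons a l ih =>
      intro hl M hM
      rw [wp, mul_assoc]
      exact ih (fun y hy => hl y (List.mem_cons_of_mem _ hy)) _
        (hM.1.pow_mul_trace (hl a List.mem_cons_self) hk)
  cases l with
  | nil => exact absurd rfl h0
  | cons a l =>
    have h1 := inCone_one.pow_mul_trace (hl a List.mem_cons_self) hk
    rw [mul_one] at h1
    exact (key l (fun y hy => hl y (List.mem_cons_of_mem _ hy)) _ h1).2

/-- A matrix-valued function of a real parameter with polynomial entries. -/
def IsPolyMat (F : ℝ → M2) : Prop := ∀ i j, ∃ p : Polynomial ℝ, ∀ t, F t i j = p.eval t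

lemma IsPolyMat.const (M : M2) : IsPolyMat fun _ => M :=
  fun i j => ⟨Polynomial.C (M i j), fun t => by simp⟩

lemma IsPolyMat.mul {F G : ℝ → M2} (hF : IsPolyMat F) (hG : IsPolyMat G) :
    IsPolyMat fun t => F t * G t := by
  intro i j
  choose p hp using hF
  choose q hq using hG
  exact ⟨p i 0 * q 0 j + p i 1 * q 1 j, fun t => by
    simp [Matrix.mul_apply, Fin.sum_univ_two, hp, hq]⟩

lemma IsPolyMat.sub {F G : ℝ → M2} (hF : IsPolyMat F) (hG : IsPolyMat G) :
    IsPolyMat fun t => F t - G t := by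
  intro i j
  obtain ⟨p, hp⟩ := hF i j
  obtain ⟨q, hq⟩ := hG i j
  exact ⟨p - q, fun t => by simp [hp, hq]⟩

lemma IsPolyMat.pow {F : ℝ → M2} (hF : IsPolyMat F) (k : ℕ) : IsPolyMat fun t => F t ^ k := by
  induction k with
  | zero => simpa using IsPolyMat.const 1
  | succ k ih => simpa only [pow_succ] using ih.mul hF

lemma isPolyMat_tA (a : ℝ) : IsPolyMat fun t => tA (a + t) := by
  intro i j
  fin_cases i <;> fin_cases j
  · exact ⟨Polynomial.C a + Polynomial.X, fun t => by simp [tA]⟩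
  · exact ⟨Polynomial.C (-1), fun t => by simp [tA]⟩
  · exact ⟨Polynomial.C 1, fun t => by simp [tA]⟩
  · exact ⟨0, fun t => by simp [tA]⟩

lemma isPolyMat_wp (k : ℕ) (l : List ℝ) : IsPolyMat fun t => wp k (l.map (· + t)) := by
  induction l with
  | nil => simpa [wp] using IsPolyMat.const 1
  | cons a l ih => simpa [wp] using ih.mul ((isPolyMat_tA a).pow k)

lemma IsPolyMat.continuous {F : ℝ → M2} (hF : IsPolyMat F) : Continuous F := by
  refine continuous_pi fun i => continuous_pi fun j => ?_
  obtain ⟨p, hp⟩ := hF i j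
  simp only [hp]
  exact p.continuous

lemma poly_eq_of_near {p q : Polynomial ℝ} {a r : ℝ} (hr : 0 < r)
    (h : ∀ t, |t - a| < r → p.eval t = q.eval t) : p = q := by
  refine Polynomial.eq_of_infinite_eval_eq p q (Set.Infinite.mono (s := Ioo (a - r) (a + r)) ?_
    (Ioo_infinite (by linarith)))
  intro t ht
  exact h t (abs_lt.2 ⟨by linarith [ht.1], by linarith [ht.2]⟩)

/-- Gap opening: arbitrarily close to any periodic word there is a word (a concatenation of
perturbed periods) whose transfer matrix is hyperbolic. -/
lemma exists_hyperbolic_word {k : ℕ} (hk : 0 < k) {x : List ℝ} (hx : x ≠ []) {δ : ℝ} (hδ : 0 < δ) :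
    ∃ L : List (List ℝ), L ≠ [] ∧ (∀ b ∈ L, List.Forall₂ (fun a y => |y - a| < δ) x b) ∧
      2 < |(wp k L.flatten).trace| := by
  by_contra hcon
  push Not at hcon
  set Bl : Set M2 := {M | ∃ b, List.Forall₂ (fun a y => |y - a| < δ) x b ∧ M = wp k b} with hBl
  set S := Subsemigroup.closure Bl with hS
  have hSL : ∀ M ∈ S, ∃ L : List (List ℝ), L ≠ [] ∧
      (∀ b ∈ L, List.Forall₂ (fun a y => |y - a| < δ) x b) ∧ M = wp k L.flatten := by
    intro M hM
    induction hM using Subsemigroup.closure_induction with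
    | mem M h =>
      obtain ⟨b, hb, rfl⟩ := h
      exact ⟨[b], by simp, by simpa using hb, by simp⟩
    | mul M M' _ _ h h' =>
      obtain ⟨L, h1, h2, rfl⟩ := h
      obtain ⟨L', h1', h2', rfl⟩ := h'
      refine ⟨L' ++ L, by simp [h1], fun b hb => ?_, by rw [List.flatten_append, wp_append]⟩
      rcases List.mem_append.1 hb with hb | hb
      · exact h2' b hb
      · exact h2 b hb
  have htr : ∀ M ∈ S, |M.trace| ≤ 2 := by
    intro M hM
    obtain ⟨L, h1, h2, rfl⟩ := hSL M hM
    exact hcon L h1 h2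
  have hmem : ∀ b, List.Forall₂ (fun a y => |y - a| < δ) x b → wp k b ∈ S := fun b hb =>
    Subsemigroup.subset_closure ⟨b, hb, rfl⟩
  have hblk : ∀ t, |t| < δ → List.Forall₂ (fun a y => |y - a| < δ) x (x.map (· + t)) := by
    intro t ht
    rw [List.forall₂_map_right_iff]
    exact List.forall₂_same.2 fun a _ => by simpa using ht
  -- There is an elliptic element: otherwise the trace, a polynomial in the translation parameter,
  -- would be constantly `±2`, whereas it is at least `3` for large translations.
  obtain ⟨t₀, ht₀, hell⟩ : ∃ t, |t| < δ ∧ |(wp k (x.map (· + t))).trace| < 2 := by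
    by_contra hno
    push Not at hno
    obtain ⟨p, hp⟩ : ∃ p : Polynomial ℝ, ∀ t, (wp k (x.map (· + t))).trace = p.eval t := by
      obtain ⟨p, hp⟩ := isPolyMat_wp k x 0 0
      obtain ⟨q, hq⟩ := isPolyMat_wp k x 1 1
      exact ⟨p + q, fun t => by
        rw [Matrix.trace_fin_two, Polynomial.eval_add, ← hp, ← hq]⟩
    have h2 : p ^ 2 = Polynomial.C 4 := by
      refine poly_eq_of_near (a := 0) hδ fun t ht => ?_
      rw [sub_zero] at ht
      have h3 := le_antisymm (htr _ (hmem _ (hblk t ht))) (hno t ht)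
      rw [Polynomial.eval_pow, ← hp, ← sq_abs, h3, Polynomial.eval_C]; norm_num
    obtain ⟨s, hs⟩ : ∃ s : ℝ, ∀ y ∈ x, -s ≤ y := by
      obtain ⟨m, hm⟩ := (x.toFinset.finite_toSet).bddBelow
      exact ⟨-m, fun y hy => by rw [neg_neg]; exact hm (by simpa using hy)⟩
    have h5 := wp_trace_large hk (l := x.map (· + (s + 5))) (fun y hy => by
      obtain ⟨a, ha, rfl⟩ := List.mem_map.1 hy
      linarith [hs a ha]) (by simpa using hx)
    have h6 := congrArg (Polynomial.eval (s + 5)) h2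
    rw [Polynomial.eval_pow, ← hp, Polynomial.eval_C] at h6
    nlinarith
  -- Varying only the first letter gives elliptic elements near `X`, which all commute with `X`;
  -- by polynomial dependence on the letter, so do the ones for large letters, which are unbounded.
  -- This contradicts the boundedness of the centralizer of `X`.
  obtain ⟨x₀, x', rfl⟩ := List.exists_cons_of_ne_nil hx
  set C := wp k (x'.map (· + t₀)) with hC
  set X := wp k ((x₀ :: x').map (· + t₀)) with hXdef
  have hXS : X ∈ S := hmem _ (hblk t₀ ht₀)
  have hFpoly : IsPolyMat fun t => C * tA (x₀ + t) ^ k :=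
    (IsPolyMat.const C).mul ((isPolyMat_tA x₀).pow k)
  have hX : X = C * tA (x₀ + t₀) ^ k := by rw [hXdef, List.map_cons, wp]
  have hev : ∀ᶠ t in nhds t₀, |t| < δ ∧ |(C * tA (x₀ + t) ^ k).trace| < 2 := by
    refine ((continuous_abs.tendsto t₀).eventually_lt_const ht₀).and ?_
    refine (Continuous.tendsto (f := fun t => |(C * tA (x₀ + t) ^ k).trace|)
      (continuous_abs.comp (hFpoly.continuous.matrix_trace)) t₀).eventually_lt_const ?_
    rw [← hX]; exact hell
  obtain ⟨r, hr, hball⟩ := Metric.eventually_nhds_iff.1 hev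
  have hdX : X.det = 1 := det_wp _ _
  have hdF : ∀ t, (C * tA (x₀ + t) ^ k).det = 1 := fun t => by
    rw [Matrix.det_mul, Matrix.det_pow, det_tA, hC, det_wp, one_pow, one_mul]
  have hcomm : ∀ t, |t - t₀| < r → (C * tA (x₀ + t) ^ k) * X = X * (C * tA (x₀ + t) ^ k) := by
    intro t ht
    obtain ⟨h1, h2⟩ := hball (y := t) (by simpa [Real.dist_eq] using ht)
    have hY : C * tA (x₀ + t) ^ k ∈ S := by
      have := hmem ((x₀ + t) :: x'.map (· + t₀)) (by
        have := hblk t₀ ht₀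
        rw [List.map_cons, List.forall₂_cons] at this
        exact List.Forall₂.cons (by simpa using h1) this.2)
      rwa [wp] at this
    exact elliptic_commute S htr hY hXS (hdF t) hdX h2 hell
  have hcommAll : ∀ t, (C * tA (x₀ + t) ^ k) * X = X * (C * tA (x₀ + t) ^ k) := by
    intro t
    ext i j
    obtain ⟨p, hp⟩ := (hFpoly.mul (IsPolyMat.const X)) i j
    obtain ⟨q, hq⟩ := ((IsPolyMat.const X).mul hFpoly) i j
    have : p = q := poly_eq_of_near hr fun t ht => by rw [← hp, ← hq]; exact congrFun (congrFun (hcomm t ht) i) j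
    exact (hp t).trans ((congrArg _ this).trans (hq t).symm)
  obtain ⟨K, hK⟩ := centralizer_bound hdX hell
  have hbd : ∀ t, |(tA (x₀ + t) ^ k) 0 0| ≤ (|C.adjugate 0 0| + |C.adjugate 0 1|) * K := by
    intro t
    have e : tA (x₀ + t) ^ k = C.adjugate * (C * tA (x₀ + t) ^ k) := by
      rw [← mul_assoc, Matrix.adjugate_mul, hC, det_wp, one_smul, one_mul]
    have b := hK _ (hdF t) (hcommAll t)
    rw [e, Matrix.mul_apply, Fin.sum_univ_two, add_mul]
    refine (abs_add_le _ _).trans ?_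
    rw [abs_mul, abs_mul]
    gcongr
    · exact b 0 0
    · exact b 1 0
  set D := (|C.adjugate 0 0| + |C.adjugate 0 1|) * K with hD
  have h7 := hbd (|D| + 3 - x₀)
  obtain ⟨k, rfl⟩ := Nat.exists_eq_succ_of_ne_zero hk.ne'
  have e8 : x₀ + (|D| + 3 - x₀) = |D| + 3 := by ring
  rw [e8, Nat.succ_eq_add_one, pow_succ'] at h7
  have h8 : (2:ℝ) ≤ |D| + 3 := by linarith [abs_nonneg D]
  have h9 := (inCone_one.pow_mul h8 k).tA_mul h8
  rw [mul_one] at h9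
  linarith [le_abs_self D, le_abs_self ((tA (|D| + 3) * tA (|D| + 3) ^ k) 0 0), h9.2.1]

end

/-! ### A finite family of potentials with gaps everywhere -/

section

lemma tm_add (W : ℤ → ℝ) (n : ℤ) (i j : ℕ) : tm W n (i + j) = tm W (n + i) j * tm W n i := by
  induction j with
  | zero => simp [tm]
  | succ j ih =>
    rw [← add_assoc, tm, ih, tm, Matrix.mul_assoc]
    congr 4
    push_cast; ring

lemma tm_const {W : ℤ → ℝ} {n : ℤ} {a : ℝ} {j : ℕ} (h : ∀ i < j, W (n + (i : ℕ)) = -a) :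
    tm W n j = tA a ^ j := by
  induction j with
  | zero => simp [tm]
  | succ j ih =>
    rw [tm, ih fun i hi => h i (by omega), h j (by omega), neg_neg, pow_succ']

/-- The transfer matrix of a potential whose `k`-blocks spell the word `l`. -/
lemma tm_word {U : ℤ → ℝ} {k : ℕ} {l : List ℝ}
    (h : ∀ i < l.length, ∀ j < k, U ((k * i + j : ℕ) : ℤ) = - l.getD i 0) :
    tm U 0 (k * l.length) = wp k l := by
  have key : ∀ i ≤ l.length, tm U 0 (k * i) = wp k (l.take i) := by
    intro i
    induction i with
    | zero => intro _; simp [tm, wp]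
    | succ i ih =>
      intro hi
      rw [mul_add, mul_one, tm_add, ih (by omega), tm_const (a := l.getD i 0)]
      · rw [List.take_add_one, wp_append, List.getElem?_eq_getElem (by omega)]
        simp [wp, List.getElem?_eq_getElem (show i < l.length by omega)]
      · intro j hj
        rw [← h i (by omega) j hj]
        congr 1
        push_cast; ring
  simpa using key l.length le_rfl

lemma periodic_emod {W : ℤ → ℝ} {p : ℕ} (h : Function.Periodic W (p : ℤ)) (n : ℤ) :
    W (n % p) = W n := by
  have := h.int_mul (n / p) (n % p)
  rwa [mul_comm, Int.cast_id, Int.emod_add_mul_ediv, eq_comm] at this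

lemma periodic_bdd {W : ℤ → ℝ} {p : ℕ} (hp : 0 < p) (h : Function.Periodic W (p : ℤ)) :
    ∃ C, ∀ n, |W n| ≤ C := by
  refine ⟨∑ i ∈ Finset.range p, |W i|, fun n => ?_⟩
  have h1 := periodic_emod h n
  have h2 : 0 ≤ n % (p : ℤ) := Int.emod_nonneg _ (by omega)
  have h3 : n % (p : ℤ) < p := Int.emod_lt_of_pos _ (by omega)
  rw [← h1]
  obtain ⟨m, hm⟩ := Int.eq_ofNat_of_zero_le h2
  rw [hm]
  exact Finset.single_le_sum (f := fun i : ℕ => |W i|) (fun _ _ => abs_nonneg _)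
    (Finset.mem_range.2 (by omega))

lemma repeatPot_apply (W : ℤ → ℝ) {k : ℕ} (n : ℤ) : repeatPot W k n = W (n / k) := by
  rw [repeatPot, Int.fdiv_eq_ediv_of_nonneg _ (by omega)]

lemma repeatPot_periodic {W : ℤ → ℝ} {p : ℕ} (h : Function.Periodic W (p : ℤ)) {k : ℕ}
    (hk : 0 < k) : Function.Periodic (repeatPot W k) ((k * p : ℕ) : ℤ) := by
  intro n
  rw [repeatPot_apply, repeatPot_apply]
  push_cast
  rw [Int.add_mul_ediv_left _ _ (by omega)]
  exact h _

lemma flatten_near {y : ℕ → ℝ} {q : ℕ} (hy : ∀ i, y (i + q) = y i) {δ : ℝ} (L : List (List ℝ))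
    (hL : ∀ b ∈ L, List.Forall₂ (fun a z => |z - a| < δ) ((List.range q).map y) b) :
    L.flatten.length = L.length * q ∧
      ∀ i < L.flatten.length, |L.flatten.getD i 0 - y i| < δ := by
  induction L with
  | nil => simp
  | cons b L ih =>
    obtain ⟨h1, h2⟩ := ih fun b hb => hL b (List.mem_cons_of_mem _ hb)
    have hb := hL b List.mem_cons_self
    have hlen : b.length = q := by simpa using hb.length_eq.symm
    refine ⟨by simp only [List.flatten_cons, List.length_append, h1, List.length_cons, hlen]; ring,
      fun i hi => ?_⟩
    rw [List.flatten_cons] at hi ⊢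
    rcases lt_or_ge i q with hiq | hiq
    · rw [List.getD_append _ _ _ _ (by omega), List.getD_eq_getElem _ _ (by omega)]
      have := hb.get (i := i) (by simpa using hiq) (by omega)
      simpa using this
    · rw [List.getD_append_right _ _ _ _ (by omega), hlen]
      rw [List.length_append] at hi
      have := h2 (i - q) (by omega)
      rwa [← hy (i - q), Nat.sub_add_cancel hiq] at this

/-- Any single energy, coupling and repetition number can be put into a gap by a small periodic
perturbation of a periodic potential. -/
lemma gap_open {V : ℤ → ℝ} {q : ℕ} (hq : 0 < q) (hV : Function.Periodic V (q : ℤ)) {ε : ℝ}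
    (hε : 0 < ε) {lam : ℝ} (hlam : lam ≠ 0) {k : ℕ} (hk : 0 < k) (E : ℝ) :
    ∃ (W : ℤ → ℝ) (p : ℕ), 0 < p ∧ Function.Periodic W (p : ℤ) ∧ (∀ n, |W n - V n| ≤ ε) ∧
      ∃ c > 0, BddBelowOp (fun n => lam * repeatPot W k n - E) c := by
  set y : ℕ → ℝ := fun i => E - lam * V i with hy
  have hyq : ∀ i, y (i + q) = y i := fun i => by
    simp only [hy]; push_cast; rw [hV]
  have hl : 0 < |lam| := abs_pos.2 hlam
  obtain ⟨L, hL0, hLb, hLt⟩ := exists_hyperbolic_word hk (x := (List.range q).map y)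
    (by simp; omega) (mul_pos hε hl)
  obtain ⟨hlen, hnear⟩ := flatten_near hyq L hLb
  set l := L.flatten
  have hm : 0 < l.length := by
    rw [hlen]; exact Nat.mul_pos (List.length_pos_of_ne_nil hL0) hq
  set m := l.length
  set W : ℤ → ℝ := fun n => (E - l.getD (n % m).toNat 0) / lam with hW
  have hWper : Function.Periodic W (m : ℤ) := fun n => by simp [hW]
  refine ⟨W, m, hm, hWper, fun n => ?_, ?_⟩
  · have h1 : V n = V ((n % m).toNat : ℕ) := by
      have h0 : 0 ≤ n % (m : ℤ) := Int.emod_nonneg _ (by omega)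
      have hVm : Function.Periodic V (m : ℤ) := by
        rw [hlen]; push_cast
        exact hV.int_mul L.length
      rw [Int.toNat_of_nonneg h0, periodic_emod hVm]
    have hlt : (n % m).toNat < m := by
      have := Int.emod_lt_of_pos n (show (0:ℤ) < m by omega)
      have h0 : 0 ≤ n % (m : ℤ) := Int.emod_nonneg _ (by omega)
      omega
    have h2 := hnear _ hlt
    rw [h1]
    simp only [hW]
    set i := (n % m).toNat
    have e : (E - l.getD i 0) / lam - V i = -(l.getD i 0 - y i) / lam := by
      simp only [hy]; field_simp; ring
    rw [e, abs_div, abs_neg, div_le_iff₀ hl]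
    exact h2.le
  · set U : ℤ → ℝ := fun n => lam * repeatPot W k n - E with hU
    have hUper : Function.Periodic U ((k * m : ℕ) : ℤ) := fun n => by
      simp only [hU]; rw [repeatPot_periodic hWper hk]
    have htm : tm U 0 (k * m) = wp k l := by
      apply tm_word
      intro i hi j hj
      simp only [hU, repeatPot_apply, hW]
      have e1 : ((k * i + j : ℕ) : ℤ) / k = i := by
        rw [← Int.natCast_div]
        congr 1
        rw [Nat.mul_add_div hk, Nat.div_eq_of_lt hj, add_zero]
      have e2 : ((i : ℤ) % m).toNat = i := by
        rw [← Int.natCast_mod, Int.toNat_natCast, Nat.mod_eq_of_lt hi]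
      rw [e1, e2]
      field_simp
      ring
    refine bddBelowOp_of_trace (periodic_bdd (Nat.mul_pos hk hm) hUper) hUper ?_
    rw [htm]; exact hLt

lemma BddBelowOp.mono {W : ℤ → ℝ} {c c' : ℝ} (h : BddBelowOp W c) (hc : c' ≤ c) :
    BddBelowOp W c' := fun f hf => by
  have := h f hf
  nlinarith [N2_nonneg f]

lemma repeatPot_bdd {W : ℤ → ℝ} (hW : ∃ C, ∀ n, |W n| ≤ C) (lam : ℝ) (k : ℕ) :
    ∃ C, ∀ n, |lam * repeatPot W k n| ≤ C := by
  obtain ⟨C, hC⟩ := hW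
  exact ⟨|lam| * C, fun n => by rw [abs_mul]; gcongr; exact hC _⟩

lemma common_period (F : List (ℤ → ℝ))
    (hF : ∀ W ∈ F, ∃ p : ℕ, 0 < p ∧ Function.Periodic W (p : ℤ)) :
    ∃ p : ℕ, 0 < p ∧ ∀ W ∈ F, Function.Periodic W (p : ℤ) := by
  induction F with
  | nil => exact ⟨1, one_pos, by simp⟩
  | cons W F ih =>
    obtain ⟨p, hp, h⟩ := ih fun W hW => hF W (List.mem_cons_of_mem _ hW)
    obtain ⟨p', hp', h'⟩ := hF W List.mem_cons_self
    refine ⟨p * p', Nat.mul_pos hp hp', fun W' hW' => ?_⟩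
    rcases List.mem_cons.1 hW' with rfl | hW'
    · push_cast; exact h'.int_mul p
    · push_cast; rw [mul_comm]; exact (h W' hW').int_mul p'

/-- The range of admissible couplings at scale `K`. -/
def couplings (K : ℕ) : Set ℝ := {lam | 1 / (K : ℝ) ≤ |lam| ∧ |lam| ≤ K}

/-- Compactness: finitely many perturbations open gaps, uniformly, at all energies, all couplings
in a compact set, and boundedly many repetition numbers. -/
lemma finite_family {V : ℤ → ℝ} {q : ℕ} (hq : 0 < q) (hV : Function.Periodic V (q : ℤ)) {ε : ℝ}
    (hε : 0 < ε) {K : ℕ} (hK : 0 < K) :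
    ∃ (F : List (ℤ → ℝ)) (p : ℕ), F ≠ [] ∧ 0 < p ∧ (∀ W ∈ F, Function.Periodic W (p : ℤ)) ∧
      (∀ W ∈ F, ∀ n, |W n - V n| ≤ ε) ∧ ∃ η > 0, ∀ k : ℕ, 0 < k → k ≤ K → ∀ lam ∈ couplings K,
        ∀ E : ℝ, ∃ W ∈ F, BddBelowOp (fun n => lam * repeatPot W k n - E) η := by
  have hK' : (0:ℝ) < K := by exact_mod_cast hK
  obtain ⟨B, hB⟩ := periodic_bdd hq hV
  -- for `|E| > R` the potential `V` itself already works, by `bddBelowOp_of_large`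
  set R : ℝ := K * B + 4 with hR
  set T : Set (ℕ × ℝ × ℝ) := Icc 1 K ×ˢ (couplings K ×ˢ Icc (-R) R) with hT
  have hcoup : IsCompact (couplings K) := by
    refine Metric.isCompact_of_isClosed_isBounded ?_ ?_
    · exact (isClosed_le continuous_const continuous_abs).inter
        (isClosed_le continuous_abs continuous_const)
    · refine (Metric.isBounded_closedBall (x := (0:ℝ)) (r := K)).subset fun l hl => ?_
      simpa [Real.dist_eq] using hl.2
  have hTc : IsCompact T := (Set.finite_Icc 1 K).isCompact.prod (hcoup.prod isCompact_Icc)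
  let P : Set (ℕ × ℝ × ℝ) → Prop := fun s => ∃ F : List (ℤ → ℝ),
    (∀ W ∈ F, (∃ p : ℕ, 0 < p ∧ Function.Periodic W (p : ℤ)) ∧ ∀ n, |W n - V n| ≤ ε) ∧
    ∃ η > 0, ∀ x ∈ s, ∃ W ∈ F, BddBelowOp (fun n => x.2.1 * repeatPot W x.1 n - x.2.2) η
  have hP : P T := by
    refine hTc.induction_on (p := P) ?_ ?_ ?_ ?_
    · exact ⟨[], by simp, 1, one_pos, by simp⟩
    · rintro s t hst ⟨F, h1, η, h2, h3⟩
      exact ⟨F, h1, η, h2, fun x hx => h3 x (hst hx)⟩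
    · rintro s t ⟨F, h1, η, h2, h3⟩ ⟨F', h1', η', h2', h3'⟩
      refine ⟨F ++ F', fun W hW => ?_, min η η', lt_min h2 h2', fun x hx => ?_⟩
      · rcases List.mem_append.1 hW with h | h
        · exact h1 W h
        · exact h1' W h
      · rcases hx with hx | hx
        · obtain ⟨W, hW, h⟩ := h3 x hx
          exact ⟨W, List.mem_append_left _ hW, h.mono (min_le_left _ _)⟩
        · obtain ⟨W, hW, h⟩ := h3' x hx
          exact ⟨W, List.mem_append_right _ hW, h.mono (min_le_right _ _)⟩
    · rintro ⟨k, lam, E⟩ ⟨hk, hl, -⟩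
      have hlam : lam ≠ 0 := by
        intro h
        have := hl.1
        simp only [h, abs_zero] at this
        have : 0 < 1 / (K : ℝ) := by positivity
        linarith
      obtain ⟨W, p, hp, hWp, hWV, c, hc, hbb⟩ := gap_open hq hV hε hlam (k := k) hk.1 E
      obtain ⟨C, hC⟩ := periodic_bdd hp hWp
      set d : ℝ := Real.sqrt c / 2 with hd
      have hd0 : 0 < d := by positivity
      have hdc : 2 * d ^ 2 ≤ c / 2 := by
        rw [hd, div_pow, Real.sq_sqrt hc.le]; linarith
      have hev : ∀ᶠ x : ℕ × ℝ × ℝ in nhds (k, lam, E),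
          x.1 = k ∧ |lam - x.2.1| * C + |E - x.2.2| < d := by
        refine Filter.Eventually.and ?_ ?_
        · exact continuous_fst.tendsto (k, lam, E) (IsOpen.mem_nhds (isOpen_discrete {k}) rfl)
        · have hcont : Continuous fun x : ℕ × ℝ × ℝ => |lam - x.2.1| * C + |E - x.2.2| := by
            fun_prop
          refine (hcont.tendsto (k, lam, E)).eventually_lt_const ?_
          simpa using hd0
      refine ⟨_, mem_nhdsWithin_of_mem_nhds hev, [W], ?_, c / 4, by positivity, ?_⟩
      · intro W' hW'
        rw [List.mem_singleton] at hW'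
        subst hW'
        exact ⟨⟨p, hp, hWp⟩, hWV⟩
      · rintro ⟨k', lam', E'⟩ ⟨h1, h2⟩
        dsimp only at h1 h2
        subst h1
        refine ⟨W, by simp, hbb.perturb (bdd_sub (repeatPot_bdd ⟨C, hC⟩ _ _) _) (fun n => ?_) hdc⟩
        have e : lam * repeatPot W k' n - E - (lam' * repeatPot W k' n - E')
            = (lam - lam') * repeatPot W k' n - (E - E') := by ring
        dsimp only
        rw [e]
        refine (abs_sub _ _).trans ?_
        rw [abs_mul]
        have : |lam - lam'| * |repeatPot W k' n| ≤ |lam - lam'| * C := by gcongr; exact hC _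
        linarith
  obtain ⟨F, hF, η, hη, h⟩ := hP
  have hF' : ∀ W ∈ V :: F, (∃ p : ℕ, 0 < p ∧ Function.Periodic W (p : ℤ)) ∧
      ∀ n, |W n - V n| ≤ ε := by
    intro W hW
    rcases List.mem_cons.1 hW with rfl | hW
    · exact ⟨⟨q, hq, hV⟩, fun n => by simpa using hε.le⟩
    · exact hF W hW
  obtain ⟨p, hp, hper⟩ := common_period (V :: F) fun W hW => (hF' W hW).1
  refine ⟨V :: F, p, by simp, hp, hper, fun W hW => (hF' W hW).2, min η 4,
    lt_min hη (by norm_num), fun k hk hkK lam hlam E => ?_⟩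
  by_cases hE : |E| ≤ R
  · obtain ⟨W, hW, h'⟩ := h (k, lam, E) ⟨⟨hk, hkK⟩, hlam, abs_le.1 hE⟩
    exact ⟨W, List.mem_cons_of_mem _ hW, h'.mono (min_le_left _ _)⟩
  · refine ⟨V, List.mem_cons_self, BddBelowOp.mono (bddBelowOp_of_large
      (bdd_sub (repeatPot_bdd ⟨B, hB⟩ _ _) _) fun n => ?_) (min_le_right _ _)⟩
    have h1 : |lam * repeatPot V k n| ≤ K * B := by
      rw [abs_mul]
      exact mul_le_mul hlam.2 (hB _) (abs_nonneg _) hK'.le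
    have h2 := abs_sub_abs_le_abs_sub E (lam * repeatPot V k n)
    rw [abs_sub_comm]
    push Not at hE
    linarith

end

/-! ### Decoupling near stretches with a gap -/

section

/-- The `a`-neighbourhood of the lattice `N ℤ`. -/
def Strip (N a : ℕ) : Set ℤ := {n | ∃ z : ℤ, -(a : ℤ) ≤ n - z * N ∧ n - z * N < a}

lemma strip_mono {N a b : ℕ} (h : a ≤ b) : Strip N a ⊆ Strip N b := by
  rintro n ⟨z, h1, h2⟩
  exact ⟨z, by omega, by omega⟩

lemma strip_add {N a : ℕ} {n : ℤ} (h : n ∈ Strip N a) : n + 1 ∈ Strip N (a + 1) := by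
  obtain ⟨z, h1, h2⟩ := h
  exact ⟨z, by push_cast; omega, by push_cast; omega⟩

lemma strip_sub {N a : ℕ} {n : ℤ} (h : n ∈ Strip N a) : n - 1 ∈ Strip N (a + 1) := by
  obtain ⟨z, h1, h2⟩ := h
  exact ⟨z, by push_cast; omega, by push_cast; omega⟩

lemma indicator_sq_le (S : Set ℤ) (f : ℤ → ℝ) (n : ℤ) : (S.indicator f n) ^ 2 ≤ f n ^ 2 := by
  by_cases h : n ∈ S
  · rw [indicator_of_mem h]
  · rw [indicator_of_notMem h]; nlinarith [sq_nonneg (f n)]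

lemma indicator_bound {f : ℤ → ℝ} (hf : Sq f) (S : Set ℤ) :
    Sq (S.indicator f) ∧ N2 (S.indicator f) ≤ N2 f :=
  sq_of_le hf.hasSum (indicator_sq_le S f)

/-- Cutting off `f` to a strip on which `U` agrees with an operator that is bounded below: the mass
on the smaller strip is dominated by a boundary term. -/
lemma strip_step {U U' : ℤ → ℝ} {N b : ℕ} {η : ℝ} (hU : ∃ C, ∀ n, |U n| ≤ C)
    (hη : 0 < η) (hbb : BddBelowOp U' η) (heq : ∀ n ∈ Strip N (b + 1), U' n = U n)
    {f : ℤ → ℝ} (hf : Sq f) :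
    (6 + η) * N2 ((Strip N b).indicator f) ≤
      6 * N2 ((Strip N (b + 2)).indicator f) + 3 * N2 (schr U f) := by
  obtain ⟨C, hC⟩ := hU
  have hh : Sq (schr U f) := (schr_bound hC hf).1
  set h := schr U f with hhdef
  set g0 := (Strip N b).indicator f with hg0
  set g := (Strip N (b + 1)).indicator f with hg
  set g2 := (Strip N (b + 2)).indicator f with hg2
  have s01 : Strip N b ⊆ Strip N (b + 1) := strip_mono (by omega)
  have s12 : Strip N (b + 1) ⊆ Strip N (b + 2) := strip_mono (by omega)
  have q0 : Sq g0 := (indicator_bound hf _).1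
  have q1 : Sq g := (indicator_bound hf _).1
  have q2 : Sq g2 := (indicator_bound hf _).1
  have hmono : N2 g0 ≤ N2 g := by
    have : g0 = (Strip N b).indicator g := by
      rw [hg0, hg, Set.indicator_indicator, Set.inter_eq_left.2 s01]
    rw [this]; exact (indicator_bound q1 _).2
  have hA : ∀ m ∈ Strip N (b + 2), (f m - g m) ^ 2 ≤ g2 m ^ 2 - g0 m ^ 2 := by
    intro m hm
    have e2 : g2 m = f m := indicator_of_mem hm f
    by_cases h1 : m ∈ Strip N (b + 1)
    · have e1 : g m = f m := indicator_of_mem h1 f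
      have := indicator_sq_le (Strip N b) f m
      rw [e1, e2]; simp only [sub_self]; linarith
    · have e1 : g m = 0 := indicator_of_notMem h1 f
      have e0 : g0 m = 0 := indicator_of_notMem (fun h => h1 (s01 h)) f
      rw [e0, e1, e2]; linarith
  have hBd : ∀ m ∉ Strip N b, g m ^ 2 ≤ g2 m ^ 2 - g0 m ^ 2 := by
    intro m hm
    have e0 : g0 m = 0 := indicator_of_notMem hm f
    by_cases h1 : m ∈ Strip N (b + 1)
    · have e1 : g m = f m := indicator_of_mem h1 f
      have e2 : g2 m = f m := indicator_of_mem (s12 h1) f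
      rw [e0, e1, e2]; linarith
    · have e1 : g m = 0 := indicator_of_notMem h1 f
      rw [e0, e1]; nlinarith [sq_nonneg (g2 m)]
  have main := (sq_of_le (f := schr U' g)
    (((hh.hasSum.mul_left 3).add
      (((q2.hasSum_shift (-1)).sub (q0.hasSum_shift (-1))).mul_left 3)).add
      (((q2.hasSum_shift 1).sub (q0.hasSum_shift 1)).mul_left 3)) fun n => ?_).2
  · have := hbb g q1
    nlinarith
  · simp only [← sub_eq_add_neg]
    by_cases hn : n ∈ Strip N (b + 1)
    · have e1 : g n = f n := indicator_of_mem hn f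
      have a1 := hA (n - 1) (strip_sub hn)
      have a2 := hA (n + 1) (strip_add hn)
      have e : schr U' g n = h n - (f (n - 1) - g (n - 1)) - (f (n + 1) - g (n + 1)) := by
        rw [hhdef]; simp only [schr]; rw [e1, heq n hn]; ring
      rw [e]
      generalize f (n - 1) - g (n - 1) = x at *
      generalize f (n + 1) - g (n + 1) = y at *
      nlinarith [sq_nonneg (h n + x), sq_nonneg (h n + y), sq_nonneg (x - y)]
    · have e1 : g n = 0 := indicator_of_notMem hn f
      have a1 := hBd (n - 1) fun h => hn (by simpa using strip_add h)
      have a2 := hBd (n + 1) fun h => hn (by simpa using strip_sub h)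
      have e : schr U' g n = g (n - 1) + g (n + 1) := by
        simp only [schr]; rw [e1]; ring
      rw [e]
      nlinarith [sq_nonneg (h n), sq_nonneg (g (n - 1) - g (n + 1)), sq_nonneg (g (n - 1)),
        sq_nonneg (g (n + 1))]

/-- Exponential smallness near the centres of the strips. -/
lemma strip_decay {U U' : ℤ → ℝ} {N j : ℕ} {η : ℝ} (hU : ∃ C, ∀ n, |U n| ≤ C)
    (hη : 0 < η) (hbb : BddBelowOp U' η) (heq : ∀ n ∈ Strip N (2 * j), U' n = U n)
    {f : ℤ → ℝ} (hf : Sq f) :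
    N2 ((Strip N 1).indicator f) ≤
      (6 / (6 + η)) ^ j * N2 f + (6 + η) / (2 * η) * N2 (schr U f) := by
  set γ := 6 / (6 + η) with hγ
  set C := (6 + η) / (2 * η) with hC
  have hγ0 : 0 < γ := by positivity
  have hCγ : (1 - γ) * C = 1 / 2 := by rw [hγ, hC]; field_simp; ring
  have hC0 : 0 < C := by positivity
  have hH := N2_nonneg (schr U f)
  have key : ∀ i ≤ j, N2 ((Strip N 1).indicator f) ≤
      γ ^ i * N2 ((Strip N (1 + 2 * i)).indicator f) + C * (1 - γ ^ i) * N2 (schr U f) := by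
    intro i
    induction i with
    | zero => intro _; simp
    | succ i ih =>
      intro hi
      have h1 := ih (by omega)
      have h2 := strip_step (N := N) (b := 1 + 2 * i) hU hη hbb
        (fun n hn => heq n (strip_mono (by omega) hn)) hf
      have h3 : N2 ((Strip N (1 + 2 * i)).indicator f) ≤
          γ * N2 ((Strip N (1 + 2 * (i + 1))).indicator f) + (1 - γ) * C * N2 (schr U f) := by
        rw [hCγ, hγ]
        have e : 1 + 2 * i + 2 = 1 + 2 * (i + 1) := by ring
        rw [e] at h2
        have hp : 0 < 6 + η := by positivity
        rw [← sub_nonneg]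
        have e3 : 6 / (6 + η) * N2 ((Strip N (1 + 2 * (i + 1))).indicator f)
            + 1 / 2 * N2 (schr U f) - N2 ((Strip N (1 + 2 * i)).indicator f)
            = (6 * N2 ((Strip N (1 + 2 * (i + 1))).indicator f) + (6 + η) / 2 * N2 (schr U f)
              - (6 + η) * N2 ((Strip N (1 + 2 * i)).indicator f)) / (6 + η) := by
          field_simp
        rw [e3]
        apply div_nonneg _ hp.le
        nlinarith
      have h4 : γ ^ i * N2 ((Strip N (1 + 2 * i)).indicator f) ≤ γ ^ i *
        (γ * N2 ((Strip N (1 + 2 * (i + 1))).indicator f) + (1 - γ) * C * N2 (schr U f)) := by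
        gcongr
      calc _ ≤ _ := h1
        _ ≤ γ ^ i * (γ * N2 ((Strip N (1 + 2 * (i + 1))).indicator f)
            + (1 - γ) * C * N2 (schr U f)) + C * (1 - γ ^ i) * N2 (schr U f) := by linarith
        _ = _ := by ring
  have h1 := key j le_rfl
  have h2 : γ ^ j * N2 ((Strip N (1 + 2 * j)).indicator f) ≤ γ ^ j * N2 f := by
    gcongr; exact (indicator_bound hf _).2
  have h3 : C * (1 - γ ^ j) * N2 (schr U f) ≤ C * N2 (schr U f) := by
    have : 0 < γ ^ j := by positivity
    have : 0 ≤ C * γ ^ j * N2 (schr U f) := by positivity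
    nlinarith
  linarith

/-- The restriction of the operator to the box `[0, N)` with Dirichlet conditions. -/
def boxM (U : ℤ → ℝ) (N : ℕ) : Matrix (Fin N) (Fin N) ℝ := fun i j =>
  (if i = j then U i else 0) + (if (i : ℕ) + 1 = j then 1 else 0)
    + (if (j : ℕ) + 1 = i then 1 else 0)

lemma boxM_herm (U : ℤ → ℝ) (N : ℕ) : (boxM U N).IsHermitian := by
  ext i j
  simp only [Matrix.conjTranspose_apply, boxM, star_trivial]
  by_cases h : i = j
  · subst h; ring
  · rw [if_neg h, if_neg (Ne.symm h)]; ring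

/-- Distance to the eigenvalues bounds a symmetric matrix from below. -/
lemma herm_lower {N : ℕ} {B : Matrix (Fin N) (Fin N) ℝ} (hB : B.IsHermitian) {E r : ℝ}
    (hr : ∀ i, r ≤ (E - hB.eigenvalues i) ^ 2) (x : Fin N → ℝ) :
    r * ∑ i, x i ^ 2 ≤ ∑ i, (B.mulVec x i - E * x i) ^ 2 := by
  set b := hB.eigenvectorBasis
  have hsq : ∀ v : Fin N → ℝ, ∑ i, v i ^ 2 = ∑ i, (inner ℝ (b i) (WithLp.toLp 2 v)) ^ 2 := by
    intro v
    have h1 := b.sum_sq_norm_inner_right (WithLp.toLp 2 v)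
    rw [EuclideanSpace.norm_sq_eq] at h1
    simpa using h1.symm
  have hin : ∀ i, inner ℝ (b i) (WithLp.toLp 2 (fun l => B.mulVec x l - E * x l))
      = (hB.eigenvalues i - E) * inner ℝ (b i) (WithLp.toLp 2 x) := by
    intro i
    have h1 := hB.mulVec_eigenvectorBasis i
    have h2 : ∀ l, ∑ m, B l m * b i m = hB.eigenvalues i * b i l := fun l => by
      have := congrFun h1 l
      simpa [Matrix.mulVec, dotProduct] using this
    simp only [PiLp.inner_apply, RCLike.inner_apply, conj_trivial, Matrix.mulVec, dotProduct]
    have h3 : ∑ l, (∑ m, B l m * x m) * b i l = ∑ m, x m * (hB.eigenvalues i * b i m) := by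
      simp only [Finset.sum_mul]
      rw [Finset.sum_comm]
      refine Finset.sum_congr rfl fun m _ => ?_
      rw [← h2 m, Finset.mul_sum]
      refine Finset.sum_congr rfl fun l _ => ?_
      have : B l m = B m l := by
        have := congrFun (congrFun hB m) l
        simpa using this
      rw [this]; ring
    simp only [sub_mul, Finset.sum_sub_distrib]
    rw [h3, Finset.mul_sum, Finset.mul_sum]
    congr 1
    · exact Finset.sum_congr rfl fun m _ => by ring
    · exact Finset.sum_congr rfl fun m _ => by ring
  rw [hsq x, hsq (fun l => B.mulVec x l - E * x l), Finset.mul_sum]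
  refine Finset.sum_le_sum fun i _ => ?_
  rw [hin, mul_pow]
  have := hr i
  nlinarith [sq_nonneg (inner ℝ (b i) (WithLp.toLp 2 x))]

lemma hasSum_blocks {F : ℤ → ℝ} {S : ℝ} (hF : HasSum F S) {N : ℕ} (hN : 0 < N) :
    HasSum (fun z : ℤ => ∑ i : Fin N, F (z * N + i)) S := by
  have : NeZero N := ⟨hN.ne'⟩
  have h1 : HasSum (F ∘ (Int.divModEquiv N).symm) S := (Equiv.hasSum_iff _).2 hF
  refine (h1.prod_fiberwise (g := fun z : ℤ => ∑ i : Fin N, F (z * N + i)) fun z => ?_)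
  convert hasSum_fintype (fun i : Fin N => F (z * N + i)) using 1
  funext i
  simp [Int.divModEquiv]

lemma boxM_mulVec (U f : ℤ → ℝ) {N : ℕ} (z : ℤ) (i : Fin N) :
    (boxM U N).mulVec (fun l : Fin N => f (z * N + l)) i
      = U i * f (z * N + i) + (if (i : ℕ) + 1 < N then f (z * N + i + 1) else 0)
        + (if 0 < (i : ℕ) then f (z * N + i - 1) else 0) := by
  simp only [Matrix.mulVec, dotProduct, boxM, add_mul, Finset.sum_add_distrib, ite_mul, zero_mul,
    one_mul]
  congr 1
  · congr 1
    · simp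
    · split_ifs with h
      · rw [Finset.sum_eq_single (⟨i + 1, h⟩ : Fin N)]
        · simp [add_assoc]
        · intro l _ hl
          rw [if_neg]
          intro h'; exact hl (Fin.ext h'.symm)
        · simp
      · refine Finset.sum_eq_zero fun l _ => if_neg fun h' => h (by rw [h']; exact l.2)
  · split_ifs with h
    · rw [Finset.sum_eq_single (⟨i - 1, by omega⟩ : Fin N)]
      · rw [if_pos (by simp; omega)]
        congr 1
        push_cast [Nat.cast_sub (show 1 ≤ (i : ℕ) by omega)]
        ring
      · intro l _ hl
        rw [if_neg]
        intro h'; exact hl (Fin.ext (by simp; omega))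
      · simp
    · exact Finset.sum_eq_zero fun l _ => if_neg fun h' => h (by omega)

/-- Decoupling at sites where solutions are exponentially small: away from the eigenvalues of one
box matrix, the periodic operator is bounded below. -/
lemma thin_lower {U U' : ℤ → ℝ} {N j : ℕ} {η E : ℝ} (hN : 0 < N)
    (hper : Function.Periodic U (N : ℤ)) (hη : 0 < η)
    (hbb : BddBelowOp (fun n => U' n - E) η) (heq : ∀ n ∈ Strip N (2 * j), U' n = U n)
    (hE : ∀ i, 12 * (6 / (6 + η)) ^ j ≤ (E - (boxM_herm U N).eigenvalues i) ^ 2) :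
    BddBelowOp (fun n => U n - E) (6 * (6 / (6 + η)) ^ j / (3 + 6 * ((6 + η) / (2 * η)))) := by
  have hU := periodic_bdd hN hper
  intro f hf
  have hdec := strip_decay (U := fun n => U n - E) (N := N) (j := j) (bdd_sub hU E) hη hbb
    (fun n hn => by rw [heq n hn]) hf
  obtain ⟨B, hB⟩ := bdd_sub hU E
  have hh : Sq (schr (fun n => U n - E) f) := (schr_bound hB hf).1
  set h := schr (fun n => U n - E) f with hhdef
  set γ := 6 / (6 + η) with hγ
  set C := (6 + η) / (2 * η) with hC
  have hC0 : 0 < C := by positivity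
  set d := (Strip N 1).indicator f with hd
  have qd : Sq d := (indicator_bound hf _).1
  have hR := ((hh.hasSum.mul_left 3).add ((qd.hasSum_shift (-1)).mul_left 3)).add
      ((qd.hasSum_shift 1).mul_left 3)
  -- on each box, the Dirichlet matrix differs from the operator only by the values of `f` at the
  -- two neighbouring sites, which lie in `Strip N 1`
  have hblock : ∀ z : ℤ, (12 * γ ^ j) * ∑ i : Fin N, f (z * N + i) ^ 2 ≤
      ∑ i : Fin N, (3 * h (z * N + i) ^ 2 + 3 * d (z * N + i + -1) ^ 2
        + 3 * d (z * N + i + 1) ^ 2) := by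
    intro z
    refine (herm_lower (boxM_herm U N) hE (fun l : Fin N => f (z * N + l))).trans
      (Finset.sum_le_sum fun i _ => ?_)
    rw [boxM_mulVec]
    simp only [← sub_eq_add_neg]
    have hUi : U (z * N + i) = U i := by
      have := hper.int_mul z i
      rwa [add_comm] at this
    have hx : ∃ x, (if (i : ℕ) + 1 < N then f (z * N + i + 1) else 0) = f (z * N + i + 1) - x ∧
        x ^ 2 ≤ d (z * N + i + 1) ^ 2 := by
      split_ifs with h1
      · exact ⟨0, by ring, by simp only [ne_eq, OfNat.ofNat_ne_zero, not_false_eq_true, zero_pow]; positivity⟩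
      · refine ⟨f (z * N + i + 1), by ring, ?_⟩
        rw [hd, indicator_of_mem]
        have := i.2
        refine ⟨z + 1, ?_, ?_⟩ <;> · rw [add_mul]; push_cast; omega
    have hy : ∃ y, (if 0 < (i : ℕ) then f (z * N + i - 1) else 0) = f (z * N + i - 1) - y ∧
        y ^ 2 ≤ d (z * N + i - 1) ^ 2 := by
      split_ifs with h1
      · exact ⟨0, by ring, by simp only [ne_eq, OfNat.ofNat_ne_zero, not_false_eq_true, zero_pow]; positivity⟩
      · refine ⟨f (z * N + i - 1), by ring, ?_⟩
        rw [hd, indicator_of_mem]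
        refine ⟨z, ?_, ?_⟩ <;> · push_cast; omega
    obtain ⟨x, hx1, hx2⟩ := hx
    obtain ⟨y, hy1, hy2⟩ := hy
    rw [hx1, hy1]
    have e : U i * f (z * N + i) + (f (z * N + i + 1) - x) + (f (z * N + i - 1) - y)
        - E * f (z * N + i) = h (z * N + i) - x - y := by
      rw [hhdef]; simp only [schr]; rw [hUi]; ring
    rw [e]
    generalize h (z * N + i) = a at *
    nlinarith [sq_nonneg (a + x), sq_nonneg (a + y), sq_nonneg (x - y)]
  have h1 := hasSum_le hblock ((hasSum_blocks hf.hasSum hN).mul_left (12 * γ ^ j))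
    (hasSum_blocks hR hN)
  have hN2 := N2_nonneg h
  rw [div_mul_eq_mul_div, div_le_iff₀ (by positivity)]
  linarith

end

/-! ### Periodic potentials with thin spectrum -/

section

/-- Concatenation of long stretches of the potentials in `F`, each of length `2 R`. -/
def glue (F : List (ℤ → ℝ)) (R : ℕ) (n : ℤ) : ℝ :=
  F.getD (n / (2 * R : ℕ) % F.length).toNat 0 n

lemma glue_mem {F : List (ℤ → ℝ)} (hF : F ≠ []) (R : ℕ) (n : ℤ) :
    ∃ W ∈ F, glue F R n = W n := by
  have hm : 0 < F.length := List.length_pos_of_ne_nil hF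
  have h0 : 0 ≤ n / (2 * R : ℕ) % (F.length : ℤ) := Int.emod_nonneg _ (by omega)
  have h1 : n / (2 * R : ℕ) % (F.length : ℤ) < F.length := Int.emod_lt_of_pos _ (by omega)
  have h2 : (n / (2 * R : ℕ) % (F.length : ℤ)).toNat < F.length := by omega
  exact ⟨F[(n / (2 * R : ℕ) % (F.length : ℤ)).toNat], List.getElem_mem _, by
    rw [glue, List.getD_eq_getElem _ _ h2]⟩

lemma glue_eq {F : List (ℤ → ℝ)} {R : ℕ} {n z r : ℤ} {i : ℕ} (hi : i < F.length)
    (h0 : 0 ≤ r) (h1 : r < (2 * R : ℕ)) (hn : n = r + (2 * R : ℕ) * (i + F.length * z)) :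
    glue F R n = F[i] n := by
  have hR : ((2 * R : ℕ) : ℤ) ≠ 0 := by omega
  have e1 : n / (2 * R : ℕ) = i + F.length * z := by
    rw [hn, Int.add_mul_ediv_left _ _ hR, Int.ediv_eq_zero_of_lt h0 h1, zero_add]
  have e2 : (n / (2 * R : ℕ) % (F.length : ℤ)).toNat = i := by
    rw [e1, Int.add_mul_emod_self_left, Int.emod_eq_of_lt (by omega) (by omega), Int.toNat_natCast]
  rw [glue, e2, List.getD_eq_getElem _ _ hi]

lemma glue_periodic {F : List (ℤ → ℝ)} {p L : ℕ} (hp : 0 < p) (hL : 0 < L)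
    (hF : ∀ W ∈ F, Function.Periodic W (p : ℤ)) (hF0 : F ≠ []) :
    Function.Periodic (glue F (p * L)) ((2 * (p * L) * F.length : ℕ) : ℤ) := by
  intro n
  have hm : 0 < F.length := List.length_pos_of_ne_nil hF0
  have hR : ((2 * (p * L) : ℕ) : ℤ) ≠ 0 := by
    have : 0 < p * L := Nat.mul_pos hp hL
    omega
  have h0 : 0 ≤ n / (2 * (p * L) : ℕ) % (F.length : ℤ) := Int.emod_nonneg _ (by omega)
  have h1 : n / (2 * (p * L) : ℕ) % (F.length : ℤ) < F.length := Int.emod_lt_of_pos _ (by omega)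
  have h2 : (n / (2 * (p * L) : ℕ) % (F.length : ℤ)).toNat < F.length := by omega
  have e1 : (n + ((2 * (p * L) * F.length : ℕ) : ℤ)) / (2 * (p * L) : ℕ) % (F.length : ℤ)
      = n / (2 * (p * L) : ℕ) % (F.length : ℤ) := by
    rw [Nat.cast_mul (2 * (p * L)), Int.add_mul_ediv_left _ _ hR, Int.add_emod_right]
  rw [glue, glue, e1, List.getD_eq_getElem _ _ h2]
  have := (hF _ (List.getElem_mem h2)).int_mul ((2 * L * F.length : ℕ) : ℤ) n
  have e2 : n + ((2 * (p * L) * F.length : ℕ) : ℤ) = n + ((2 * L * F.length : ℕ) : ℤ) * (p : ℤ) := by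
    push_cast; ring
  rw [e2]
  exact this

/-- A periodic potential near `V` whose operators have spectrum covered by few tiny intervals,
stably under perturbation. -/
lemma thin_potential {V : ℤ → ℝ} {q : ℕ} (hq : 0 < q) (hV : Function.Periodic V (q : ℤ)) {ε : ℝ}
    (hε : 0 < ε) {K : ℕ} (hK : 0 < K) :
    ∃ (W : ℤ → ℝ) (p : ℕ), 0 < p ∧ Function.Periodic W (p : ℤ) ∧ (∀ n, |W n - V n| ≤ ε) ∧
      ∃ c > 0, ∃ (m : ℕ) (v : ℝ), 0 < m ∧ 0 < v ∧ m * v ≤ 1 / K ∧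
        ∀ lam ∈ couplings K, ∀ k : ℕ, 0 < k → k ≤ K → ∃ s : Finset ℝ, s.card ≤ m ∧
          ∀ E : ℝ, (∀ e ∈ s, v ^ K < |E - e|) →
            BddBelowOp (fun n => lam * repeatPot W k n - E) c := by
  obtain ⟨F, p, hF0, hp, hFp, hFV, η, hη, hfam⟩ := finite_family hq hV hε hK
  have hm : 0 < F.length := List.length_pos_of_ne_nil hF0
  set γ := 6 / (6 + η) with hγ
  have hγ0 : 0 < γ := by positivity
  have hγ1 : γ < 1 := by rw [hγ, div_lt_one (by positivity)]; linarith
  have h2K : 2 * K ≠ 0 := by omega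
  -- `β` is a root of `γ`, so that `12 γ ^ j ≤ ((4 β ^ j) ^ K) ^ 2`
  set β := γ ^ (((2 * K : ℕ) : ℝ)⁻¹) with hβ
  have hβ0 : 0 < β := by positivity
  have hβγ : β ^ (2 * K) = γ := Real.rpow_inv_natCast_pow hγ0.le h2K
  have hβ1 : β < 1 := by
    by_contra h
    push Not at h
    have := one_le_pow₀ h (n := 2 * K)
    linarith
  have hlim : Filter.Tendsto (fun j : ℕ => (F.length * (K * (2 * (p * (2 * j + 1)) * F.length)) : ℝ)
      * (4 * β ^ j)) Filter.atTop (nhds 0) := by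
    have t1 := tendsto_self_mul_const_pow_of_lt_one hβ0.le hβ1
    have t2 := tendsto_pow_atTop_nhds_zero_of_lt_one hβ0.le hβ1
    have := (t1.const_mul (16 * F.length * K * p * F.length : ℝ)).add
      (t2.const_mul (8 * F.length * K * p * F.length : ℝ))
    simp only [mul_zero, add_zero] at this
    refine this.congr fun j => by ring
  have hKp : (0:ℝ) < 1 / K := by positivity
  obtain ⟨j, hj⟩ := (hlim.eventually_lt_const hKp).exists
  set L := 2 * j + 1 with hL
  set W := glue F (p * L) with hW
  have hWper : Function.Periodic W ((2 * (p * L) * F.length : ℕ) : ℤ) :=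
    glue_periodic hp (by omega) hFp hF0
  set Q := 2 * (p * L) * F.length with hQ
  have hpL : 0 < p * L := Nat.mul_pos hp (by omega)
  have hQ0 : 0 < Q := Nat.mul_pos (by omega) hm
  refine ⟨W, Q, hQ0, hWper, fun n => ?_, 6 * γ ^ j / (3 + 6 * ((6 + η) / (2 * η))),
    by positivity, F.length * (K * Q), 4 * β ^ j, by positivity, by positivity, ?_, ?_⟩
  · obtain ⟨W', hW', e⟩ := glue_mem hF0 (p * L) n
    rw [hW, e]; exact hFV W' hW' n
  · have e : ((F.length * (K * Q) : ℕ) : ℝ)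
        = (F.length * (K * (2 * (p * (2 * j + 1)) * F.length)) : ℝ) := by
      rw [hQ, hL]; push_cast; ring
    rw [e]; exact hj.le
  intro lam hlam k hk hkK
  set N := k * Q with hN
  have hN0 : 0 < N := Nat.mul_pos hk hQ0
  set U : ℤ → ℝ := fun n => lam * repeatPot W k n with hU
  have hUper : Function.Periodic U (N : ℤ) := fun n => by
    simp only [hU]; rw [repeatPot_periodic hWper hk]
  -- the centre of the stretch of the `i`-th potential
  let ctr : ℕ → ℤ := fun i => ((k * ((2 * i + 1) * (p * L)) : ℕ) : ℤ)
  let Us : ℕ → ℤ → ℝ := fun i n => U (n + ctr i)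
  have hUsper : ∀ i, Function.Periodic (Us i) (N : ℤ) := fun i n => by
    simp only [Us]; rw [add_right_comm, hUper]
  -- the exceptional energies: Dirichlet eigenvalues of the period boxes cut at the centres `ctr i`
  refine ⟨Finset.univ.biUnion fun i : Fin F.length =>
    Finset.univ.image (boxM_herm (Us i) N).eigenvalues, ?_, ?_⟩
  · refine Finset.card_biUnion_le.trans ?_
    refine (Finset.sum_le_card_nsmul _ _ N fun i _ => ?_).trans ?_
    · exact Finset.card_image_le.trans (by simp)
    · simp only [Finset.card_univ, Fintype.card_fin, smul_eq_mul]
      rw [hN]; gcongr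
  intro E hE
  -- the member of the family with a gap at `E` is the one around whose stretches `f` decays
  obtain ⟨W', hW', hbb⟩ := hfam k hk hkK lam hlam E
  obtain ⟨i, hi, rfl⟩ := List.mem_iff_getElem.1 hW'
  have hbdd' : ∃ C, ∀ n, |lam * repeatPot F[i] k n - E| ≤ C :=
    bdd_sub (repeatPot_bdd (periodic_bdd hp (hFp _ hW')) _ _) _
  have hbdd : ∃ C, ∀ n, |U n - E| ≤ C := bdd_sub (periodic_bdd hN0 hUper) _
  have hbb' : BddBelowOp (fun n => lam * repeatPot F[i] k (n + ctr i) - E) η := by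
    refine BddBelowOp.translate (-ctr i) ?_ ?_
    · simpa using hbb
    · obtain ⟨C, hC⟩ := hbdd'
      exact ⟨C, fun n => hC _⟩
  refine BddBelowOp.translate (ctr i) ?_ hbdd
  refine thin_lower (U := Us i) (U' := fun n => lam * repeatPot F[i] k (n + ctr i)) hN0
    (hUsper i) hη hbb' ?_ ?_
  · rintro n ⟨z, hz1, hz2⟩
    simp only [Us, hU]
    congr 1
    rw [repeatPot_apply, repeatPot_apply, hW]
    symm
    set r := n - z * N with hr
    have hk' : (k : ℤ) ≠ 0 := by omega
    have e1 : (n + ctr i) / k = r / k + ((2 * i + 1) * (p * L) + z * Q) := by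
      have : n + ctr i = r + k * (((2 * i + 1) * (p * L) + z * Q)) := by
        rw [hr, hN]; simp only [ctr]; push_cast; ring
      rw [this, Int.add_mul_ediv_left _ _ hk']
    have hkpos : (0:ℤ) < k := by omega
    have b1 : -(2 * j : ℤ) ≤ r / k := by
      rw [Int.le_ediv_iff_mul_le hkpos]; push_cast at hz1; nlinarith
    have b2 : r / k < 2 * j + 1 := by
      rw [Int.ediv_lt_iff_lt_mul hkpos]; push_cast at hz2; nlinarith
    have b3 : ((2 * j + 1 : ℕ) : ℤ) ≤ ((p * L : ℕ) : ℤ) := by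
      have : 1 * L ≤ p * L := Nat.mul_le_mul_right _ hp
      omega
    refine glue_eq (r := r / k + (p * L : ℕ)) (z := z) hi ?_ ?_ ?_
    · push_cast at b3 ⊢; linarith
    · push_cast at b3 ⊢; linarith
    · rw [e1, hQ]; push_cast; ring
  · intro l
    have h1 := hE ((boxM_herm (Us i) N).eigenvalues l) (by
      rw [Finset.mem_biUnion]
      exact ⟨⟨i, hi⟩, Finset.mem_univ _, Finset.mem_image_of_mem _ (Finset.mem_univ _)⟩)
    set e := (boxM_herm (Us i) N).eigenvalues l
    rw [← sq_abs (E - e)]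
    have h2 : ((4 * β ^ j) ^ K) ^ 2 ≤ |E - e| ^ 2 := by gcongr
    have h3 : ((4 * β ^ j) ^ K) ^ 2 = (4 ^ K) ^ 2 * γ ^ j := by
      rw [← hβγ]; ring
    have h4 : (4:ℝ) ≤ 4 ^ K := by
      calc (4:ℝ) = 4 ^ 1 := by norm_num
        _ ≤ 4 ^ K := pow_le_pow_right₀ (by norm_num) hK
    have h5 : 12 * γ ^ j ≤ (4 ^ K) ^ 2 * γ ^ j := by
      gcongr; nlinarith
    rw [← hγ]
    linarith

end

/-! ### Hausdorff dimension and the generic set -/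

section

/-- Sets that are covered, at arbitrarily fine scales, by `m` intervals of radius `v ^ K` with
`m * v ≤ 1 / K` have Hausdorff dimension zero: the `d`-dimensional cost of such a cover is at most
`2 ^ d * m * v ^ (K * d)`, which stays bounded once `K * d ≥ 1`. -/
lemma dimH_eq_zero_of_cover {S : Set ℝ} {K₀ : ℕ} (hK₀ : 0 < K₀)
    (h : ∀ K : ℕ, K₀ ≤ K → ∃ (m : ℕ) (v : ℝ) (s : Finset ℝ), 0 < m ∧ 0 < v ∧ m * v ≤ 1 / K ∧
      s.card ≤ m ∧ ∀ E ∈ S, ∃ e ∈ s, |E - e| ≤ v ^ K) : dimH S = 0 := by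
  refine le_antisymm ?_ bot_le
  refine ENNReal.le_of_forall_pos_le_add fun d hd _ => ?_
  rw [zero_add]
  refine dimH_le_of_hausdorffMeasure_ne_top ?_
  have h' : ∀ n : ℕ, ∃ (m : ℕ) (v : ℝ) (s : Finset ℝ), 0 < m ∧ 0 < v ∧
      m * v ≤ 1 / ((K₀ + n : ℕ) : ℝ) ∧
      s.card ≤ m ∧ ∀ E ∈ S, ∃ e ∈ s, |E - e| ≤ v ^ (K₀ + n) := fun n => h _ (by omega)
  choose m v s hm hv hmv hs hcov using h'
  have hv1 : ∀ n, v n ≤ 1 / ((K₀ + n : ℕ) : ℝ) := fun n => by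
    refine le_trans ?_ (hmv n)
    have : (1 : ℝ) ≤ m n := by exact_mod_cast hm n
    nlinarith [hv n]
  have hK1 : ∀ n, (1 : ℝ) ≤ ((K₀ + n : ℕ) : ℝ) := fun n => by
    exact_mod_cast (by omega : 1 ≤ K₀ + n)
  have hvle : ∀ n, v n ≤ 1 := fun n => (hv1 n).trans (by
    rw [div_le_one (by linarith [hK1 n])]; exact hK1 n)
  let t : ∀ n : ℕ, (s n) → Set ℝ := fun n e => Icc ((e : ℝ) - v n ^ (K₀ + n)) (e + v n ^ (K₀ + n))
  have hdiam : ∀ n (e : s n), Metric.ediam (t n e) = ENNReal.ofReal (2 * v n ^ (K₀ + n)) := by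
    intro n e
    simp only [t, Real.ediam_Icc]
    congr 1; ring
  let r : ℕ → ENNReal := fun n => ENNReal.ofReal (2 * (1 / ((n : ℝ) + 1)))
  have hr : Filter.Tendsto r Filter.atTop (nhds 0) := by
    have := (tendsto_one_div_add_atTop_nhds_zero_nat (𝕜 := ℝ)).const_mul 2
    have := ENNReal.tendsto_ofReal this
    simpa [r] using this
  have hpow : ∀ n, v n ^ (K₀ + n) ≤ v n := fun n =>
    pow_le_of_le_one (hv n).le (hvle n) (by omega)
  have ht : ∀ᶠ n in Filter.atTop, ∀ e, Metric.ediam (t n e) ≤ r n := by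
    refine Filter.Eventually.of_forall fun n e => ?_
    rw [hdiam]
    refine ENNReal.ofReal_le_ofReal ?_
    have h1 : (1 : ℝ) / ((K₀ + n : ℕ) : ℝ) ≤ 1 / ((n : ℝ) + 1) := by
      refine one_div_le_one_div_of_le (by positivity) ?_
      exact_mod_cast (by omega : n + 1 ≤ K₀ + n)
    linarith [hpow n, hv1 n]
  have hst : ∀ᶠ n in Filter.atTop, S ⊆ ⋃ e, t n e := by
    refine Filter.Eventually.of_forall fun n E hE => ?_
    obtain ⟨e, he, hle⟩ := hcov n E hE
    rw [abs_le] at hle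
    exact mem_iUnion.2 ⟨⟨e, he⟩, by simp only [t, mem_Icc]; constructor <;> linarith⟩
  refine ne_top_of_le_ne_top (b := ENNReal.ofReal (2 ^ (d : ℝ))) ENNReal.ofReal_ne_top ?_
  refine (Measure.hausdorffMeasure_le_liminf_sum (d : ℝ) S r hr t ht hst).trans ?_
  refine Filter.liminf_le_of_frequently_le' (Filter.Eventually.frequently ?_)
  obtain ⟨N, hN⟩ := exists_nat_ge (1 / (d : ℝ))
  have hd' : (0 : ℝ) < d := by exact_mod_cast hd
  filter_upwards [Filter.eventually_ge_atTop N] with n hn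
  have hKd : 1 ≤ ((K₀ + n : ℕ) : ℝ) * d := by
    have h1 : (N : ℝ) ≤ ((K₀ + n : ℕ) : ℝ) := by exact_mod_cast (by omega : N ≤ K₀ + n)
    have := hN.trans h1
    rwa [div_le_iff₀ hd'] at this
  have hcost : (2 * v n ^ (K₀ + n)) ^ (d : ℝ) ≤ 2 ^ (d : ℝ) * v n := by
    rw [Real.mul_rpow (by norm_num) (pow_nonneg (hv n).le _)]
    refine mul_le_mul_of_nonneg_left ?_ (by positivity)
    rw [← Real.rpow_natCast, ← Real.rpow_mul (hv n).le]
    calc v n ^ (((K₀ + n : ℕ) : ℝ) * d) ≤ v n ^ (1 : ℝ) :=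
          Real.rpow_le_rpow_of_exponent_ge (hv n) (hvle n) hKd
      _ = v n := Real.rpow_one _
  simp only [hdiam]
  rw [Finset.sum_const, Finset.card_univ, Fintype.card_coe, nsmul_eq_mul,
    ENNReal.ofReal_rpow_of_nonneg (by have := pow_pos (hv n) (K₀ + n); positivity) hd'.le,
    ← ENNReal.ofReal_natCast, ← ENNReal.ofReal_mul (by positivity)]
  refine ENNReal.ofReal_le_ofReal ?_
  have h2 : (0 : ℝ) < 2 ^ (d : ℝ) := by positivity
  have h3 : ((s n).card : ℝ) ≤ m n := by exact_mod_cast hs n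
  have h4 : (m n : ℝ) * v n ≤ 1 := (hmv n).trans (by
    rw [div_le_one (by linarith [hK1 n])]; exact hK1 n)
  calc ((s n).card : ℝ) * (2 * v n ^ (K₀ + n)) ^ (d : ℝ)
      ≤ m n * (2 ^ (d : ℝ) * v n) := by
        refine mul_le_mul h3 hcost ?_ (by positivity)
        have := pow_pos (hv n) (K₀ + n); positivity
    _ = 2 ^ (d : ℝ) * (m n * v n) := by ring
    _ ≤ 2 ^ (d : ℝ) * 1 := mul_le_mul_of_nonneg_left h4 h2.le
    _ = 2 ^ (d : ℝ) := mul_one _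

/-- Uniformly over couplings `1 / K ≤ |lam| ≤ K` and repetitions `k ≤ K`, the spectrum of
`lam * V^{⊛k}` is covered by `m` intervals of radius `v ^ K`, where `m * v ≤ 1 / K`. -/
def Thin (K : ℕ) (V : ℤ → ℝ) : Prop :=
  ∃ (m : ℕ) (v : ℝ), 0 < m ∧ 0 < v ∧ m * v ≤ 1 / K ∧
    ∀ lam ∈ couplings K, ∀ k : ℕ, 0 < k → k ≤ K → ∃ s : Finset ℝ, s.card ≤ m ∧
      ∀ E ∈ SchrodingerSpectrum (fun n => lam * repeatPot V k n), ∃ e ∈ s, |E - e| ≤ v ^ K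

/-- The periodic potentials of `thin_potential` are thin together with all sufficiently small
perturbations. -/
lemma thin_nhds {V : ℤ → ℝ} {q : ℕ} (hq : 0 < q) (hV : Function.Periodic V (q : ℤ)) {ε : ℝ}
    (hε : 0 < ε) {K : ℕ} (hK : 0 < K) :
    ∃ (W : ℤ → ℝ) (p : ℕ), 0 < p ∧ Function.Periodic W (p : ℤ) ∧ (∀ n, |W n - V n| ≤ ε) ∧
      ∃ δ > 0, ∀ V' : ℤ → ℝ, (∀ n, |W n - V' n| ≤ δ) → Thin K V' := by
  obtain ⟨W, p, hp, hW, hWV, c, hc, m, v, hm, hv, hmv, hthin⟩ := thin_potential hq hV hε hK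
  have hK' : (0 : ℝ) < K := by exact_mod_cast hK
  have hsc : 0 < √c := Real.sqrt_pos.2 hc
  refine ⟨W, p, hp, hW, hWV, √c / 2 / K, by positivity, fun V' hV' => ?_⟩
  obtain ⟨C, hC⟩ := periodic_bdd hp hW
  have hV'b : ∃ C, ∀ n, |V' n| ≤ C := ⟨C + √c / 2 / K, fun n => by
    have h1 := hC n
    have h2 := hV' n
    rw [abs_le] at *
    constructor <;> linarith⟩
  refine ⟨m, v, hm, hv, hmv, fun lam hlam k hk hkK => ?_⟩
  obtain ⟨s, hs, hb⟩ := hthin lam hlam k hk hkK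
  refine ⟨s, hs, fun E hE => ?_⟩
  by_contra! hcon
  have hU := repeatPot_bdd hV'b lam k
  have hbd := (hb E hcon).perturb (d := √c / 2) (bdd_sub hU E) (fun n => by
    have h1 : |W (n / k) - V' (n / k)| ≤ √c / 2 / K := hV' _
    have e1 : lam * repeatPot W k n - E - (lam * repeatPot V' k n - E)
        = lam * (W (n / k) - V' (n / k)) := by
      rw [repeatPot_apply, repeatPot_apply]; ring
    rw [e1, abs_mul]
    calc |lam| * |W (n / k) - V' (n / k)| ≤ K * (√c / 2 / K) :=
          mul_le_mul hlam.2 h1 (abs_nonneg _) hK'.le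
      _ = √c / 2 := by field_simp) (by
    rw [div_pow, Real.sq_sqrt hc.le]; linarith)
  exact (notMem_spectrum_iff hU E).2 ⟨c / 4, by positivity, hbd⟩ hE

/-- The limit-periodic potentials that are `Thin K`. -/
def thinSet (K : ℕ) : Set LPZ := {V | Thin K (⇑(V : ℤ →ᵇ ℝ))}

lemma dense_interior_thinSet {K : ℕ} (hK : 0 < K) : Dense (interior (thinSet K)) := by
  rw [Metric.dense_iff]
  intro V ε hε
  obtain ⟨V₀, ⟨q, hq, hper⟩, hV₀⟩ := Metric.mem_closure_iff.1 V.2 (ε / 2) (by positivity)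
  obtain ⟨W, p, hp, hW, hWV, δ, hδ, hthin⟩ :=
    thin_nhds hq (V := ⇑V₀) hper (ε := ε / 3) (by positivity) hK
  obtain ⟨C, hC⟩ := periodic_bdd hp hW
  let Wb : ℤ →ᵇ ℝ := BoundedContinuousFunction.ofNormedAddCommGroupDiscrete W C hC
  have hWb : ∀ n, Wb n = W n := fun _ => rfl
  have hmem : Wb ∈ LPZ := subset_closure ⟨p, hp, fun n => hW n⟩
  refine ⟨⟨Wb, hmem⟩, ?_, ?_⟩
  · rw [Metric.mem_ball, Subtype.dist_eq]
    have h1 : dist Wb V₀ ≤ ε / 3 := (dist_le (by positivity)).2 fun n => by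
      rw [Real.dist_eq, hWb]; exact hWV n
    have h2 := dist_triangle Wb V₀ V
    rw [dist_comm] at hV₀
    change dist Wb (V : ℤ →ᵇ ℝ) < ε
    linarith
  · rw [mem_interior_iff_mem_nhds]
    refine Filter.mem_of_superset (Metric.ball_mem_nhds _ hδ) fun V' hV' => ?_
    refine hthin _ fun n => ?_
    rw [Metric.mem_ball, Subtype.dist_eq, dist_comm] at hV'
    have := (BoundedContinuousFunction.dist_coe_le_dist (f := Wb) (g := V') n).trans hV'.le
    rwa [Real.dist_eq, hWb] at this

/-- `lam * V^{⊛k}` inherits from `V` uniform almost invariance under a lattice of translations. -/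
lemma almost_periodic {V : ℤ →ᵇ ℝ} (hV : V ∈ LPZ) (lam : ℝ) {k : ℕ} (hk : 0 < k) :
    ∀ ε > 0, ∃ N : ℕ, 0 < N ∧ ∀ n z : ℤ,
      |lam * repeatPot V k (n + z * N) - lam * repeatPot V k n| ≤ ε := by
  intro ε hε
  have hl : 0 < |lam| + 1 := by positivity
  obtain ⟨W, ⟨q, hq, hper⟩, hW⟩ := Metric.mem_closure_iff.1 hV (ε / (2 * (|lam| + 1)))
    (by positivity)
  refine ⟨k * q, by positivity, fun n z => ?_⟩
  have hp : Function.Periodic (⇑W) (q : ℤ) := hper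
  have hp2 := (repeatPot_periodic hp hk).int_mul z n
  have hd : ∀ j, |repeatPot V k j - repeatPot W k j| ≤ ε / (2 * (|lam| + 1)) := fun j => by
    rw [repeatPot_apply, repeatPot_apply, ← Real.dist_eq]
    exact (BoundedContinuousFunction.dist_coe_le_dist _).trans hW.le
  have h1 := hd (n + z * (k * q : ℕ))
  have h2 := hd n
  have hp3 : repeatPot (⇑W) k (n + z * (k * q : ℕ)) = repeatPot (⇑W) k n := by
    simpa using hp2
  have h3 : |repeatPot V k (n + z * (k * q : ℕ)) - repeatPot V k n| ≤ ε / (|lam| + 1) := by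
    have e : ε / (|lam| + 1) = ε / (2 * (|lam| + 1)) + ε / (2 * (|lam| + 1)) := by
      field_simp; norm_num
    rw [e]
    rw [hp3] at h1
    rw [abs_le] at *
    constructor <;> linarith
  rw [← mul_sub, abs_mul]
  calc |lam| * _ ≤ (|lam| + 1) * (ε / (|lam| + 1)) :=
        mul_le_mul (by linarith) h3 (abs_nonneg _) hl.le
    _ = ε := by field_simp

lemma isZeroDimCantor_of_thin {V : ℤ →ᵇ ℝ} (hV : V ∈ LPZ) (hthin : ∀ K : ℕ, Thin (K + 1) V)
    {lam : ℝ} (hlam : lam ≠ 0) {k : ℕ} (hk : 0 < k) :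
    IsZeroDimCantor (SchrodingerSpectrum (fun n => lam * repeatPot V k n)) := by
  have hU : ∃ C, ∀ n, |lam * repeatPot V k n| ≤ C :=
    repeatPot_bdd ⟨‖V‖, fun n => V.norm_coe_le_norm n⟩ lam k
  obtain ⟨A, hA⟩ := exists_nat_ge |lam|
  obtain ⟨B, hB⟩ := exists_nat_ge (1 / |lam|)
  have hl : 0 < |lam| := abs_pos.2 hlam
  have hdim : dimH (SchrodingerSpectrum (fun n => lam * repeatPot V k n)) = 0 := by
    refine dimH_eq_zero_of_cover (K₀ := A + B + k) (by omega) fun K hK => ?_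
    obtain ⟨m, v, hm, hv, hmv, h⟩ := hthin (K - 1)
    rw [Nat.sub_add_cancel (by omega)] at hmv h
    have hKA : (A : ℝ) ≤ K := by exact_mod_cast (by omega : A ≤ K)
    have hKB : (B : ℝ) ≤ K := by exact_mod_cast (by omega : B ≤ K)
    have hK0 : (0 : ℝ) < K := by exact_mod_cast (by omega : 0 < K)
    obtain ⟨s, hs, hc⟩ := h lam ⟨by
      have := hB.trans hKB
      rw [div_le_iff₀ hl] at this
      rw [div_le_iff₀ hK0]; linarith, hA.trans hKA⟩ k hk (by omega)
    exact ⟨m, v, s, hm, hv, hmv, hs, hc⟩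
  refine ⟨spectrum_nonempty hU, isCompact_spectrum hU,
    preperfect_spectrum hU (almost_periodic hV lam hk), ?_, hdim⟩
  by_contra hne
  have := Real.dimH_of_nonempty_interior (nonempty_iff_ne_empty.2 hne)
  rw [hdim] at this
  simp at this

end

/-- For generic limit-periodic `V : ℤ → ℝ`, the spectrum of `H_{λ V^{⊛k}}` is a
Cantor set of zero Hausdorff dimension for every `λ ≠ 0` and every `k ∈ ℕ`. -/
theorem repeat_generic_zero_dim_cantor :
    ∃ R : Set LPZ, IsGδ R ∧ Dense R ∧
      ∀ V ∈ R, ∀ lam : ℝ, lam ≠ 0 → ∀ k : ℕ, 0 < k →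
        IsZeroDimCantor
          (SchrodingerSpectrum (fun n => lam * repeatPot (⇑(V : ℤ →ᵇ ℝ)) k n)) := by
  have hcl : IsClosed LPZ := isClosed_closure
  have : CompleteSpace LPZ := hcl.completeSpace_coe
  refine ⟨⋂ K : ℕ, interior (thinSet (K + 1)),
    IsGδ.iInter_of_isOpen fun _ => isOpen_interior,
    dense_iInter_of_isOpen (fun _ => isOpen_interior)
      fun K => dense_interior_thinSet K.succ_pos,
    fun V hV lam hlam k hk => ?_⟩
  have hthin : ∀ K : ℕ, V ∈ thinSet (K + 1) := fun K => interior_subset (mem_iInter.1 hV K)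
  exact isZeroDimCantor_of_thin V.2 hthin hlam hk
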